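/- arXiv:1208.0509 — 3 statements merged into one kernel-verified Lean document; each statement's English description precedes it below -/
import Mathlib

section
/- Let d ≥ 1, let p ∈ ℝ^d, and let k ≥ d+2. Let X be a set of k(d+1) points in ℝ^d partitioned into d+1 color classes C_0, C_1, …, C_d of exactly k points each, with X ∪ {p} in general position. Then the number cBP_k(X) of unordered colored Birch partitions of X to p is even. -/
open scoped Classical

/-- A set of points in `ℝ^d` is in *general position* if for every `j < d`,
no `j + 2` of the points lie on a common `j`-dimensional affine subspace. -/
def GenPos (d : ℕ) (P : Set (Fin d → ℝ)) : Prop :=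
  ∀ j < d, ∀ S : Finset (Fin d → ℝ), ↑S ⊆ P → S.card = j + 2 →
    ¬ ∃ A : AffineSubspace ℝ (Fin d → ℝ),
        Module.finrank ℝ A.direction = j ∧ (S : Set (Fin d → ℝ)) ⊆ (A : Set (Fin d → ℝ))

/-- `cBP d k p X C` is the number of unordered colored Birch partitions of the point set `X`
(with color classes `C 0, …, C d`) to the point `p`: partitions of `X` into `k` blocks, each
of exactly `d + 1` points, each containing every color exactly once, and each containing `p`
in its convex hull. -/
noncomputable def cBP (d k : ℕ) (p : Fin d → ℝ) (X : Finset (Fin d → ℝ))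
    (C : Fin (d + 1) → Finset (Fin d → ℝ)) : ℕ :=
  Set.ncard { P : Finset (Finset (Fin d → ℝ)) |
    P.card = k ∧
    (∀ B ∈ P, ∀ B' ∈ P, B ≠ B' → Disjoint B B') ∧
    P.biUnion id = X ∧
    ∀ B ∈ P, B.card = d + 1 ∧ (∀ i : Fin (d + 1), (B ∩ C i).card = 1) ∧
      p ∈ convexHull ℝ (B : Set (Fin d → ℝ)) }

/-
Any `d + 2` points in general position with respect to `p` have an even number of `(d + 1)`-subsets
whose convex hull contains `p`: the linear dependencies between the vectors from `p` to the points
form a plane, these subsets correspond to the facets of its cone of nonnegative vectors, and a cone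
in a plane has zero or two facets. Hence, for a fixed point `q` of `X`, the indicator mod 2 of `p`
lying in the hull of a block `B` is the sum over `y ∈ B` of the indicators of `B \ {y} ∪ {q}`, each
of which does not depend on the point of one color.

Expand the product of these sums over the `k` blocks of a partition. As there are fewer than `k`
colors, every resulting term omits the same color in two blocks. Exchanging the points of that color
between these blocks is a fixed-point-free involution on the partitions that preserves the term, so
the sum of the term over all partitions vanishes mod 2.
-/

open Finset Function Module

section TransversalSum

variable {ι κ R : Type*} [Fintype κ] [DecidableEq κ] [CommSemiring R]

lemma prod_mul_mulSingle_swap [DecidableEq ι] {G : ι → (ι → κ) → R} (hG : ∀ c, DependsOn (G c) {c}ᶜ)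
    {col : κ → ι} {t t' : κ} (htt' : col t = col t') (s : ι → Equiv.Perm κ) :
    ∏ u, G (col u) (fun i => (s * Pi.mulSingle (col t) (Equiv.swap t t') : ι → Equiv.Perm κ) i u) =
      ∏ u, G (col u) (fun i => s i u) := by
  refine prod_congr rfl fun u _ => hG _ fun i hi => ?_
  obtain rfl | hit := eq_or_ne i (col t)
  · have hut : u ≠ t := by rintro rfl; exact hi rfl
    have hut' : u ≠ t' := by rintro rfl; exact hi htt'
    simp [Equiv.swap_apply_of_ne_of_ne hut hut']
  · simp [hit]

lemma prod_mul_const_swap (G : ι → (ι → κ) → R) {col : κ → ι} {t t' : κ}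
    (htt' : col t = col t') (s : ι → Equiv.Perm κ) :
    ∏ u, G (col u) (fun i => (s * const ι (Equiv.swap t t')) i u) =
      ∏ u, G (col u) (fun i => s i u) := by
  have hcol (u : κ) : col (Equiv.swap t t' u) = col u := by
    rw [Equiv.swap_apply_def]; split_ifs with h h' <;> simp [*]
  rw [← Equiv.prod_comp (Equiv.swap t t') fun u => G (col u) fun i => s i u]
  simp [hcol]

variable [Fintype ι] [DecidableEq ι] [CharP R 2]

lemma sum_prod_eq_zero_of_col_eq [Nontrivial ι] (i₀ : ι) {G : ι → (ι → κ) → R}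
    (hG : ∀ c, DependsOn (G c) {c}ᶜ) {col : κ → ι} {t t' : κ} (hne : t ≠ t')
    (htt' : col t = col t') :
    ∑ s : ι → Equiv.Perm κ with s i₀ = 1, ∏ u, G (col u) (fun i => s i u) = 0 := by
  set τ := Equiv.swap t t'
  have hτ : τ ≠ 1 := by simpa [τ, Equiv.swap_eq_one_iff] using hne
  -- The involution exchanges the color `col t` between the two rows. This breaks the normalization
  -- `s i₀ = 1` if that color is `i₀`; then all the other colors are exchanged.
  obtain ⟨g, hg₀, hg_ne, hg_sq, hg_prod⟩ : ∃ g : ι → Equiv.Perm κ, g i₀ = 1 ∧ g ≠ 1 ∧ g * g = 1 ∧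
      ∀ s : ι → Equiv.Perm κ, ∏ u, G (col u) (fun i => (s * g) i u) =
        ∏ u, G (col u) (fun i => s i u) := by
    have hτ_sq : τ * τ = 1 := Equiv.swap_mul_self t t'
    obtain hc | hc := eq_or_ne i₀ (col t)
    · obtain ⟨i, hi⟩ := exists_ne (col t)
      refine ⟨Pi.mulSingle (col t) τ * const ι τ, by simp [hc, hτ_sq], fun h => hτ ?_, ?_,
        fun s => ?_⟩
      · simpa [hi] using congrFun h i
      · ext1 j
        by_cases hj : j = col t <;> simp [hj, hτ_sq]
      · rw [← mul_assoc, prod_mul_const_swap G htt', prod_mul_mulSingle_swap hG htt']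
    · refine ⟨Pi.mulSingle (col t) τ, by simp [hc], by simpa using hτ, ?_,
        prod_mul_mulSingle_swap hG htt'⟩
      rw [← Pi.mulSingle_mul, hτ_sq, Pi.mulSingle_one]
  refine sum_involution (fun s _ => s * g) (fun s _ => ?_) (fun s _ _ => ?_) (fun s hs => ?_)
    (fun s _ => ?_)
  · rw [hg_prod, CharTwo.add_self_eq_zero]
  · simpa using hg_ne
  · simpa [hg₀] using hs
  · rw [mul_assoc, hg_sq, mul_one]

lemma sum_prod_sum_eq_zero [Nontrivial ι] (i₀ : ι) {G : ι → (ι → κ) → R}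
    (hG : ∀ c, DependsOn (G c) {c}ᶜ) (hcard : Fintype.card ι < Fintype.card κ) :
    ∑ s : ι → Equiv.Perm κ with s i₀ = 1, ∏ u, ∑ c, G c (fun i => s i u) = 0 := by
  simp_rw [prod_univ_sum, Fintype.piFinset_univ]
  rw [sum_comm]
  refine sum_eq_zero fun col _ => ?_
  obtain ⟨t, t', hne, htt'⟩ := Fintype.exists_ne_map_eq_of_card_lt col hcard
  exact sum_prod_eq_zero_of_col_eq i₀ hG hne htt'

end TransversalSum

section Rainbow

variable {ι κ α : Type*} {C : ι → Finset α}

lemma injective_coe_apply (hC : Pairwise (Disjoint on C)) (x : ∀ i, κ ≃ C i) (a : ι → κ) :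
    Injective fun i => (x i (a i) : α) := by
  intro i j hij
  by_contra hne
  have hmem : (x i (a i) : α) ∈ C j := by simpa only [hij] using (x j (a j)).2
  exact disjoint_left.1 (hC hne) (x i (a i)).2 hmem

variable [Fintype ι] [DecidableEq α]

/-- A set is *rainbow* for the color classes `C i` if it consists of one point of each color. -/
structure IsRainbow (C : ι → Finset α) (B : Finset α) : Prop where
  subset : B ⊆ univ.biUnion C
  card_inter : ∀ i, #(B ∩ C i) = 1

/-- A *rainbow partition* is a partition of the union of the color classes `C i` into rainbow
blocks. -/
structure IsRainbowPartition (C : ι → Finset α) (P : Finset (Finset α)) : Prop where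
  pairwiseDisjoint : (P : Set (Finset α)).PairwiseDisjoint id
  biUnion_eq : P.biUnion id = univ.biUnion C
  isRainbow : ∀ B ∈ P, IsRainbow C B

lemma IsRainbow.card_eq {B : Finset α} (hB : IsRainbow C B) (hC : Pairwise (Disjoint on C)) :
    #B = Fintype.card ι := by
  have hdisj : ((univ : Finset ι) : Set ι).PairwiseDisjoint fun i => B ∩ C i :=
    fun i _ j _ hij => (hC hij).mono inter_subset_right inter_subset_right
  rw [← inter_eq_left.2 hB.subset, inter_biUnion, card_biUnion hdisj]
  simp [hB.card_inter]

lemma IsRainbowPartition.exists_equiv {P : Finset (Finset α)} (hP : IsRainbowPartition C P)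
    (i : ι) : ∃ e : C i ≃ P, ∀ y, (y : α) ∈ (e y : Finset α) := by
  have hblock (y : C i) : ∃ B : P, (y : α) ∈ (B : Finset α) := by
    have hy : (y : α) ∈ P.biUnion id := hP.biUnion_eq ▸ mem_biUnion.2 ⟨i, mem_univ i, y.2⟩
    simpa using hy
  choose block hmem using hblock
  refine ⟨Equiv.ofBijective block ⟨fun y z hyz => ?_, fun B => ?_⟩, hmem⟩
  · have hy := mem_inter.2 ⟨hmem y, y.2⟩
    have hz := mem_inter.2 ⟨hmem z, z.2⟩
    rw [← hyz] at hz
    exact Subtype.ext (card_le_one.1 ((hP.isRainbow _ (block y).2).card_inter i).le _ hy _ hz)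
  · obtain ⟨y, hy⟩ := card_pos.1 (((hP.isRainbow B B.2).card_inter i).symm ▸ one_pos)
    obtain ⟨hyB, hyC⟩ := mem_inter.1 hy
    exact ⟨⟨y, hyC⟩, Subtype.ext
      (hP.pairwiseDisjoint.elim_finset (block _).2 B.2 y (hmem ⟨y, hyC⟩) hyB)⟩

lemma IsRainbowPartition.card_eq {P : Finset (Finset α)} (hP : IsRainbowPartition C P) (i : ι) :
    #P = #(C i) := by
  obtain ⟨e, -⟩ := hP.exists_equiv i
  simpa using (Fintype.card_congr e).symm

/-- The rainbow set with color `i` entry `x i (a i)`, where `x i` enumerates the color class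
`C i`. -/
def transversal (x : ∀ i, κ ≃ C i) (a : ι → κ) : Finset α :=
  univ.image fun i => (x i (a i) : α)

/-- The rainbow partition whose blocks are the rows `t ↦ (x i (s i t))ᵢ`. -/
def rowPartition [Fintype κ] (x : ∀ i, κ ≃ C i) (s : ι → Equiv.Perm κ) : Finset (Finset α) :=
  univ.image fun t => transversal x fun i => s i t

lemma apply_mem_transversal_iff (hC : Pairwise (Disjoint on C)) (x : ∀ i, κ ≃ C i) {a : ι → κ}
    {i : ι} {t : κ} : (x i t : α) ∈ transversal x a ↔ a i = t := by
  refine ⟨fun h => ?_, fun h => mem_image.2 ⟨i, mem_univ i, by rw [h]⟩⟩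
  obtain ⟨j, -, hj⟩ := mem_image.1 h
  obtain rfl : j = i := by
    by_contra hne
    exact disjoint_left.1 (hC hne) (x j (a j)).2 (hj ▸ (x i t).2)
  exact (x j).injective (Subtype.ext hj)

lemma isRainbow_transversal (hC : Pairwise (Disjoint on C)) (x : ∀ i, κ ≃ C i) (a : ι → κ) :
    IsRainbow C (transversal x a) := by
  refine ⟨fun y hy => ?_, fun i => card_eq_one.2 ⟨x i (a i), ?_⟩⟩
  · obtain ⟨i, -, rfl⟩ := mem_image.1 hy
    exact mem_biUnion.2 ⟨i, mem_univ i, (x i (a i)).2⟩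
  · ext y
    simp only [mem_inter, mem_singleton]
    constructor
    · rintro ⟨hy, hyC⟩
      obtain ⟨t, ht⟩ := (x i).surjective ⟨y, hyC⟩
      obtain rfl : (x i t : α) = y := congrArg Subtype.val ht
      rw [(apply_mem_transversal_iff hC x).1 hy]
    · rintro rfl
      exact ⟨(apply_mem_transversal_iff hC x).2 rfl, (x i (a i)).2⟩

lemma disjoint_transversal (hC : Pairwise (Disjoint on C)) (x : ∀ i, κ ≃ C i) {a b : ι → κ}
    (hab : ∀ i, a i ≠ b i) : Disjoint (transversal x a) (transversal x b) := by
  refine disjoint_left.2 fun y hya hyb => ?_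
  obtain ⟨i, -, rfl⟩ := mem_image.1 hya
  exact hab i ((apply_mem_transversal_iff hC x).1 hyb).symm

lemma sum_erase_transversal {R : Type*} [AddCommMonoid R] (hC : Pairwise (Disjoint on C))
    (x : ∀ i, κ ≃ C i) (a : ι → κ) (g : Finset α → R) :
    ∑ y ∈ transversal x a, g ((transversal x a).erase y) =
      ∑ c, g ((univ.erase c).image fun i => (x i (a i) : α)) := by
  have hinj := injective_coe_apply hC x a
  rw [transversal, sum_image hinj.injOn]
  simp_rw [image_erase hinj]

variable [Fintype κ]

lemma isRainbowPartition_rowPartition (hC : Pairwise (Disjoint on C)) (x : ∀ i, κ ≃ C i)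
    (s : ι → Equiv.Perm κ) : IsRainbowPartition C (rowPartition x s) where
  pairwiseDisjoint := by
    simp only [rowPartition, coe_image, coe_univ, Set.image_univ]
    rintro _ ⟨t, rfl⟩ _ ⟨t', rfl⟩ hne
    exact disjoint_transversal hC x fun i hi => hne (by rw [(s i).injective hi])
  biUnion_eq := by
    refine Subset.antisymm (biUnion_subset.2 fun B hB => ?_) fun y hy => ?_
    · obtain ⟨t, -, rfl⟩ := mem_image.1 hB
      exact (isRainbow_transversal hC x _).subset
    · obtain ⟨i, -, hi⟩ := mem_biUnion.1 hy
      refine mem_biUnion.2 ⟨_, mem_image_of_mem _ (mem_univ ((s i).symm ((x i).symm ⟨y, hi⟩))), ?_⟩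
      exact mem_image.2 ⟨i, mem_univ i, by simp⟩
  isRainbow B hB := by
    obtain ⟨t, -, rfl⟩ := mem_image.1 hB
    exact isRainbow_transversal hC x _

lemma injOn_rowPartition (hC : Pairwise (Disjoint on C)) (x : ∀ i, κ ≃ C i) (i₀ : ι) :
    Set.InjOn (rowPartition x) {s | s i₀ = 1} := by
  intro s (hs : s i₀ = 1) s' (hs' : s' i₀ = 1) hss'
  ext i t : 2
  have hrow : transversal x (fun i => s i t) ∈ rowPartition x s' :=
    hss' ▸ mem_image_of_mem _ (mem_univ t)
  obtain ⟨u, -, hu⟩ := mem_image.1 hrow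
  have hentry (j : ι) : s' j u = s j t :=
    (apply_mem_transversal_iff hC x (a := fun i => s' i u)).1
      (hu ▸ (apply_mem_transversal_iff hC x).2 rfl)
  obtain rfl : u = t := by simpa [hs, hs'] using hentry i₀
  exact (hentry i).symm

lemma IsRainbowPartition.exists_rowPartition_eq (hC : Pairwise (Disjoint on C))
    (x : ∀ i, κ ≃ C i) (i₀ : ι) {P : Finset (Finset α)} (hP : IsRainbowPartition C P) :
    ∃ s : ι → Equiv.Perm κ, s i₀ = 1 ∧ rowPartition x s = P := by
  choose e he using hP.exists_equiv
  let s (i : ι) : Equiv.Perm κ := (((x i₀).trans (e i₀)).trans (e i).symm).trans (x i).symm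
  have hrow (t : κ) : transversal x (fun i => s i t) = e i₀ (x i₀ t) := by
    refine eq_of_subset_of_card_le (fun y hy => ?_) ?_
    · obtain ⟨i, -, rfl⟩ := mem_image.1 hy
      simpa [s] using he i (x i (s i t))
    · rw [(isRainbow_transversal hC x _).card_eq hC, (hP.isRainbow _ (e _ _).2).card_eq hC]
  refine ⟨s, by ext; simp [s], ?_⟩
  ext B
  simp only [rowPartition, hrow, mem_image, mem_univ, true_and]
  refine ⟨?_, fun hB => ⟨(x i₀).symm ((e i₀).symm ⟨B, hB⟩), by simp⟩⟩
  rintro ⟨t, rfl⟩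
  exact (e i₀ (x i₀ t)).2

lemma ncard_isRainbowPartition (hC : Pairwise (Disjoint on C)) (x : ∀ i, κ ≃ C i) (i₀ : ι)
    (Q : Finset α → Prop) :
    {P | IsRainbowPartition C P ∧ ∀ B ∈ P, Q B}.ncard =
      #{s : ι → Equiv.Perm κ | s i₀ = 1 ∧ ∀ t, Q (transversal x fun i => s i t)} := by
  rw [← Set.ncard_coe_finset,
    ← ((injOn_rowPartition hC x i₀).mono fun s hs => by simp_all).ncard_image]
  congr 1
  ext P
  simp only [Set.mem_ofPred_eq, coe_filter, mem_univ, true_and, Set.mem_image]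
  constructor
  · rintro ⟨hP, hQ⟩
    obtain ⟨s, hs, rfl⟩ := hP.exists_rowPartition_eq hC x i₀
    exact ⟨s, ⟨hs, fun t => hQ _ (mem_image_of_mem _ (mem_univ t))⟩, rfl⟩
  · rintro ⟨s, ⟨-, hQ⟩, rfl⟩
    exact ⟨isRainbowPartition_rowPartition hC x s, by simpa [rowPartition] using hQ⟩

theorem even_ncard_isRainbowPartition [Nontrivial ι] {k : ℕ} (hk : Fintype.card ι < k)
    (hcard : ∀ i, #(C i) = k) (hC : Pairwise (Disjoint on C)) {Q : Finset α → Prop}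
    {g : Finset α → ZMod 2}
    (hg : ∀ B, IsRainbow C B → (if Q B then 1 else 0) = ∑ y ∈ B, g (B.erase y)) :
    Even {P | IsRainbowPartition C P ∧ ∀ B ∈ P, Q B}.ncard := by
  let x (i : ι) : Fin k ≃ C i := ((C i).equivFinOfCardEq (hcard i)).symm
  let G (c : ι) (a : ι → Fin k) : ZMod 2 := g ((univ.erase c).image fun i => (x i (a i) : α))
  have hG (c : ι) : DependsOn (G c) {c}ᶜ := fun a b hab =>
    congrArg g (image_congr fun i hi => by rw [hab i (by simpa using hi)])
  have hQ (a : ι → Fin k) : (if Q (transversal x a) then 1 else 0) = ∑ c, G c a := by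
    rw [hg _ (isRainbow_transversal hC x a), sum_erase_transversal hC x a g]
  obtain ⟨i₀⟩ := ‹Nontrivial ι›.to_nonempty
  rw [ncard_isRainbowPartition hC x i₀ Q, ← ZMod.natCast_eq_zero_iff_even, ← filter_filter,
    natCast_card_filter]
  refine Eq.trans (sum_congr (by congr!) fun s _ => ?_)
    (sum_prod_sum_eq_zero i₀ hG (by simpa using hk))
  simp_rw [← hQ, prod_ite_zero, prod_const_one, mem_univ, true_imp_iff]
  congr!

end Rainbow

section UniformPlane

variable {ι 𝕜 : Type*} [Field 𝕜] {K : Submodule 𝕜 (ι → 𝕜)}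

/-- `K` is *uniform* if no nonzero vector of `K` has two vanishing coordinates. For a plane `K` this
says that its coordinate functionals form a uniform matroid. -/
def IsUniform (K : Submodule 𝕜 (ι → 𝕜)) : Prop :=
  ∀ w ∈ K, ∀ i j, i ≠ j → w i = 0 → w j = 0 → w = 0

lemma IsUniform.exists_apply_eq_one (hK : IsUniform K) (hrank : 1 < finrank 𝕜 K) {i j : ι}
    (hij : i ≠ j) : ∃ w ∈ K, w i = 1 := by
  by_contra! h
  have hi : ∀ w ∈ K, w i = 0 := fun w hw => by
    by_contra hwi
    exact h _ (K.smul_mem (w i)⁻¹ hw) (by simp [hwi])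
  have hinj : Injective ((LinearMap.proj j : (ι → 𝕜) →ₗ[𝕜] 𝕜) ∘ₗ K.subtype) :=
    (injective_iff_map_eq_zero _).2 fun w hw =>
      Subtype.ext (hK w w.2 i j hij (hi w w.2) (by simpa using hw))
  have hle := (LinearMap.finrank_le_finrank_of_injective hinj).trans_eq (finrank_self 𝕜)
  exact hrank.not_ge hle

variable [LinearOrder 𝕜]

/-- `K` contains a vector whose `i`-th coordinate vanishes and whose other coordinates are
positive. For a plane `K` on which no two coordinates vanish simultaneously, this says that the
`i`-th coordinate defines a facet of the cone of nonnegative vectors of `K`. -/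
def IsFacetCoord (K : Submodule 𝕜 (ι → 𝕜)) (i : ι) : Prop :=
  ∃ w ∈ K, w i = 0 ∧ ∀ j ≠ i, 0 < w j

variable [IsStrictOrderedRing 𝕜]

lemma IsFacetCoord.eq_or_eq (hK : IsUniform K) {i j c : ι} (hij : i ≠ j)
    (hi : IsFacetCoord K i) (hj : IsFacetCoord K j) (hc : IsFacetCoord K c) : c = i ∨ c = j := by
  by_contra! hne
  obtain ⟨hci, hcj⟩ := hne
  obtain ⟨l, hlK, hli, hl⟩ := hi
  obtain ⟨u, huK, huj, hu⟩ := hj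
  obtain ⟨v, hvK, hvc, hv⟩ := hc
  set q := u i * v j / l j
  have hq : 0 < q := div_pos (mul_pos (hu i hij) (hv j hcj.symm)) (hl j hij.symm)
  -- The combination is chosen to vanish at `i` and `j`, but it is positive at `c`.
  have hw : v i • u - u i • v + q • l = 0 := by
    refine hK _ (K.add_mem (K.sub_mem ?_ ?_) ?_) i j hij ?_ ?_
    · exact K.smul_mem _ huK
    · exact K.smul_mem _ hvK
    · exact K.smul_mem _ hlK
    · simp [hli, mul_comm]
    · simp [huj, q, (hl j hij.symm).ne']
  have hwc : v i * u c + q * l c = 0 := by simpa [hvc] using congrFun hw c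
  exact (add_pos (mul_pos (hv i hci.symm) (hu c hcj)) (mul_pos hq (hl c hci))).ne' hwc

lemma IsFacetCoord.exists_ne [Finite ι] (hK : IsUniform K) (hrank : 1 < finrank 𝕜 K) {i : ι}
    (hi : IsFacetCoord K i) : ∃ j ≠ i, IsFacetCoord K j := by
  cases nonempty_fintype ι
  have hι : 1 < Fintype.card ι := by
    simpa using hrank.trans_le K.finrank_le
  obtain ⟨c, hc⟩ := Fintype.exists_ne_of_one_lt_card hι i
  obtain ⟨l, hlK, hli, hl⟩ := hi
  obtain ⟨m, hmK, hmi⟩ := hK.exists_apply_eq_one hrank hc.symm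
  obtain ⟨j, hj, hmax⟩ := (univ.erase i).exists_max_image (fun j => -m j / l j)
    ⟨c, mem_erase.2 ⟨hc, mem_univ c⟩⟩
  have hji := ne_of_mem_erase hj
  set w := (-m j / l j) • l + m
  have hwK : w ∈ K := K.add_mem (K.smul_mem _ hlK) hmK
  have hwi : w i = 1 := by simp [w, hli, hmi]
  have hwj : w j = 0 := by simp [w, (hl j hji).ne']
  refine ⟨j, hji, w, hwK, hwj, fun y hyj => ?_⟩
  obtain rfl | hyi := eq_or_ne y i
  · simp [hwi]
  have hwy : 0 ≤ w y := by
    have := (div_le_iff₀ (hl y hyi)).1 (hmax y (by simp [hyi]))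
    simp only [w, Pi.add_apply, Pi.smul_apply, smul_eq_mul]
    linarith
  refine hwy.lt_of_ne fun h => ?_
  simp [hK w hwK y j hyj h.symm hwj] at hwi

lemma even_card_isFacetCoord [Fintype ι] (hK : IsUniform K) (hrank : 1 < finrank 𝕜 K) :
    Even #{i | IsFacetCoord K i} := by
  obtain h | ⟨i, hi⟩ := ({i | IsFacetCoord K i} : Finset ι).eq_empty_or_nonempty
  · simp [h]
  have hi : IsFacetCoord K i := by simpa using hi
  obtain ⟨j, hji, hj⟩ := hi.exists_ne hK hrank
  have hpair : ({i | IsFacetCoord K i} : Finset ι) = {i, j} := by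
    ext c
    simp only [mem_filter, mem_univ, true_and, mem_insert, mem_singleton]
    refine ⟨hi.eq_or_eq hK hji.symm hj, ?_⟩
    rintro (rfl | rfl) <;> assumption
  rw [hpair, card_pair hji.symm]
  exact even_two

end UniformPlane

section ConvexHull

variable {𝕜 E : Type*} [Field 𝕜] [AddCommGroup E] [Module 𝕜 E]

/-- `X` is in *general position at `p`* if no hyperplane through `p` contains `dim E` points of `X`.
This is phrased as linear independence of the vectors `y - p` for `dim E` points `y` of `X`. -/
def GenPosAt (𝕜 : Type*) {E : Type*} [Field 𝕜] [AddCommGroup E] [Module 𝕜 E] (p : E)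
    (X : Finset E) : Prop :=
  ∀ S ⊆ X, #S = finrank 𝕜 E → LinearIndepOn 𝕜 (fun y => y - p) (S : Set E)

/-- The space of linear dependencies between the vectors `y - p` for `y ∈ T`. Up to scaling, its
nonnegative vectors are the ways to write `p` as a convex combination of `T`. -/
def dependencies (𝕜 : Type*) {E : Type*} [Field 𝕜] [AddCommGroup E] [Module 𝕜 E] (p : E)
    (T : Finset E) : Submodule 𝕜 (T → 𝕜) :=
  LinearMap.ker (Fintype.linearCombination 𝕜 fun y : T => (y : E) - p)

lemma mem_dependencies {p : E} {T : Finset E} {w : T → 𝕜} :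
    w ∈ dependencies 𝕜 p T ↔ ∑ y, w y • ((y : E) - p) = 0 := by
  rw [dependencies, LinearMap.mem_ker, Fintype.linearCombination_apply]

lemma card_le_finrank_dependencies_add [FiniteDimensional 𝕜 E] (p : E) (T : Finset E) :
    #T ≤ finrank 𝕜 (dependencies 𝕜 p T) + finrank 𝕜 E := by
  have hrank := LinearMap.finrank_range_add_finrank_ker
    (Fintype.linearCombination 𝕜 fun y : T => (y : E) - p)
  rw [finrank_fintype_fun_eq_card, Fintype.card_coe] at hrank
  rw [← hrank, add_comm, dependencies]
  exact Nat.add_le_add_left (Submodule.finrank_le _) _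

lemma GenPosAt.isUniform_dependencies {p : E} {T : Finset E} (hT : GenPosAt 𝕜 p T)
    (hcard : #T = finrank 𝕜 E + 2) : IsUniform (dependencies 𝕜 p T) := by
  intro w hw a b hab ha hb
  have hS : #((T.erase a).erase b) = finrank 𝕜 E := by
    rw [card_erase_of_mem (by simp [Subtype.coe_ne_coe.2 hab.symm]), card_erase_of_mem a.2, hcard]
    rfl
  let w' : E → 𝕜 := extend Subtype.val w 0
  have hw' (y : T) : w' y = w y := Subtype.val_injective.extend_apply w 0 y
  have hsum : ∑ y ∈ (T.erase a).erase b, w' y • (y - p) = 0 := by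
    rw [sum_erase _ (by simp [hw', hb]), sum_erase _ (by simp [hw', ha]), ← sum_coe_sort]
    simpa only [hw'] using mem_dependencies.1 hw
  have hzero := linearIndepOn_finset_iff.1
    (hT _ ((erase_subset _ _).trans (erase_subset _ _)) hS) w' hsum
  ext y
  by_cases hya : y = a
  · simp [hya, ha]
  by_cases hyb : y = b
  · simp [hyb, hb]
  simpa [hw'] using hzero y (by simp [hya, hyb])

lemma sum_smul_sub_eq_zero_iff {ι : Type*} {s : Finset ι} {w : ι → 𝕜} {v : ι → E} {p : E} :
    ∑ i ∈ s, w i • (v i - p) = 0 ↔ ∑ i ∈ s, w i • v i = (∑ i ∈ s, w i) • p := by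
  simp_rw [smul_sub, sum_sub_distrib, ← sum_smul, sub_eq_zero]

variable [LinearOrder 𝕜] [IsStrictOrderedRing 𝕜]

lemma notMem_convexHull_of_linearIndepOn {p : E} {S : Finset E}
    (hS : LinearIndepOn 𝕜 (fun y => y - p) (S : Set E)) : p ∉ convexHull 𝕜 (S : Set E) := by
  rw [Finset.mem_convexHull']
  rintro ⟨w, -, hw, hwp⟩
  have hzero := linearIndepOn_finset_iff.1 hS w
    (sum_smul_sub_eq_zero_iff.2 (by rw [hwp, hw, one_smul]))
  exact zero_ne_one ((sum_eq_zero hzero).symm.trans hw)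

lemma mem_convexHull_erase_iff [DecidableEq E] {p : E} {T : Finset E} (a : T) :
    p ∈ convexHull 𝕜 (T.erase a : Set E) ↔
      ∃ w ∈ dependencies 𝕜 p T, w a = 0 ∧ (∀ y, 0 ≤ w y) ∧ 0 < ∑ y, w y := by
  simp_rw [mem_dependencies, sum_smul_sub_eq_zero_iff]
  constructor
  · rw [Finset.mem_convexHull']
    rintro ⟨w, hnonneg, hw, hwp⟩
    let w' := update w a 0
    have hw' : ∀ y ∈ T.erase a, w' y = w y := fun y hy => update_of_ne (ne_of_mem_erase hy) 0 w
    have hsum : ∑ y : T, w' y = 1 := by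
      rw [sum_coe_sort, ← sum_erase T (a := (a : E)) (by simp [w']), sum_congr rfl hw', hw]
    refine ⟨fun y => w' y, ?_, by simp [w'], fun y => ?_, by rw [hsum]; exact one_pos⟩
    · rw [hsum, one_smul, sum_coe_sort T fun y => w' y • y,
        ← sum_erase T (a := (a : E)) (by simp [w']), ← hwp]
      exact sum_congr rfl fun y hy => by rw [hw' y hy]
    · obtain rfl | hya := eq_or_ne y a
      · simp [w']
      · have hy : (y : E) ∈ T.erase a := mem_erase.2 ⟨Subtype.coe_ne_coe.2 hya, y.2⟩
        exact (hnonneg y hy).trans_eq (hw' y hy).symm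
  · rintro ⟨w, hwp, hwa, hnonneg, hpos⟩
    have hcenter : (univ.erase a).centerMass w ((↑) : T → E) = p := by
      rw [centerMass_subset _ (erase_subset a univ) (by simp_all), centerMass, hwp,
        inv_smul_smul₀ hpos.ne']
    rw [← hcenter]
    refine centerMass_mem_convexHull _ (fun y _ => hnonneg y) ?_ fun y hy => ?_
    · rwa [sum_erase _ hwa]
    · simpa [Subtype.coe_ne_coe] using ne_of_mem_erase hy

lemma GenPosAt.mem_convexHull_erase_iff_isFacetCoord [DecidableEq E] {p : E} {T : Finset E}
    (hT : GenPosAt 𝕜 p T) (hcard : #T = finrank 𝕜 E + 2) (a : T) :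
    p ∈ convexHull 𝕜 (T.erase a : Set E) ↔ IsFacetCoord (dependencies 𝕜 p T) a := by
  rw [mem_convexHull_erase_iff]
  constructor
  · rintro ⟨w, hw, hwa, hnonneg, hpos⟩
    refine ⟨w, hw, hwa, fun y hya => (hnonneg y).lt_of_ne fun hwy => ?_⟩
    simp [hT.isUniform_dependencies hcard w hw y a hya hwy.symm hwa] at hpos
  · rintro ⟨w, hw, hwa, hpos⟩
    have hnonneg (y : T) : 0 ≤ w y := by
      obtain rfl | hya := eq_or_ne y a
      exacts [hwa.ge, (hpos y hya).le]
    obtain ⟨y, hya⟩ := Fintype.exists_ne_of_one_lt_card (by simp [hcard]) a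
    exact ⟨w, hw, hwa, hnonneg, sum_pos' (fun y _ => hnonneg y) ⟨y, mem_univ y, hpos y hya⟩⟩

/-- The indicator of `p` lying in the convex hull of `S`, with values mod 2 so that its sums count
parities. -/
noncomputable def hullIndicator (𝕜 : Type*) {E : Type*} [Field 𝕜] [LinearOrder 𝕜]
    [AddCommGroup E] [Module 𝕜 E] (p : E) (S : Finset E) : ZMod 2 :=
  if p ∈ convexHull 𝕜 (S : Set E) then 1 else 0

variable [FiniteDimensional 𝕜 E] [DecidableEq E]

lemma GenPosAt.sum_hullIndicator_erase {p : E} {T : Finset E} (hT : GenPosAt 𝕜 p T)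
    (hcard : #T = finrank 𝕜 E + 2) : ∑ y ∈ T, hullIndicator 𝕜 p (T.erase y) = 0 := by
  have hrank : 1 < finrank 𝕜 (dependencies 𝕜 p T) := by
    have := card_le_finrank_dependencies_add (𝕜 := 𝕜) p T
    omega
  rw [← sum_coe_sort]
  simp_rw [hullIndicator, hT.mem_convexHull_erase_iff_isFacetCoord hcard]
  rw [← natCast_card_filter, ZMod.natCast_eq_zero_iff_even]
  exact even_card_isFacetCoord (hT.isUniform_dependencies hcard) hrank

lemma GenPosAt.hullIndicator_eq_sum {p q : E} {X B : Finset E} (hX : GenPosAt 𝕜 p X)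
    (hq : q ∈ X) (hB : B ⊆ X) (hcard : #B = finrank 𝕜 E + 1) :
    hullIndicator 𝕜 p B = ∑ y ∈ B, hullIndicator 𝕜 p (insert q (B.erase y)) := by
  by_cases hqB : q ∈ B
  · rw [sum_eq_single_of_mem q hqB, insert_erase hqB]
    intro y hy hyq
    rw [insert_eq_of_mem (mem_erase.2 ⟨hyq.symm, hqB⟩), hullIndicator, if_neg]
    refine notMem_convexHull_of_linearIndepOn (hX _ ((erase_subset _ _).trans hB) ?_)
    rw [card_erase_of_mem hy, hcard, Nat.add_sub_cancel]
  · have hT : GenPosAt 𝕜 p (insert q B) := fun S hS => hX S (hS.trans (insert_subset hq hB))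
    have hsum := hT.sum_hullIndicator_erase (by rw [card_insert_of_notMem hqB, hcard])
    rw [sum_insert hqB, erase_insert hqB] at hsum
    rw [CharTwo.add_eq_zero.1 hsum]
    refine sum_congr rfl fun y hy => ?_
    rw [erase_insert_of_ne (ne_of_mem_of_not_mem hy hqB).symm]

end ConvexHull

/-- The colored Birch partitions to `p` of the union of the color classes `C i`. The sizes of
the blocks and their number are omitted from the conditions, as rainbow partitions into disjoint
color classes have the right ones. -/
def coloredBirchPartitions {ι : Type*} [Fintype ι] (𝕜 : Type*) {E : Type*} [Field 𝕜]
    [LinearOrder 𝕜] [AddCommGroup E] [Module 𝕜 E] [DecidableEq E] (p : E) (C : ι → Finset E) :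
    Set (Finset (Finset E)) :=
  {P | IsRainbowPartition C P ∧ ∀ B ∈ P, p ∈ convexHull 𝕜 (B : Set E)}

theorem cBP_even_general {ι 𝕜 E : Type*} [Fintype ι] [Field 𝕜] [LinearOrder 𝕜]
    [IsStrictOrderedRing 𝕜] [AddCommGroup E] [Module 𝕜 E] [FiniteDimensional 𝕜 E] [DecidableEq E]
    (hι : Fintype.card ι = finrank 𝕜 E + 1) {k : ℕ} (hk : finrank 𝕜 E + 2 ≤ k) (p : E)
    (C : ι → Finset E) (hcard : ∀ i, #(C i) = k) (hC : Pairwise (Disjoint on C))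
    (hgen : GenPosAt 𝕜 p (univ.biUnion C)) : Even (coloredBirchPartitions 𝕜 p C).ncard := by
  obtain ⟨i⟩ : Nonempty ι := Fintype.card_pos_iff.1 (by omega)
  obtain ⟨q, hq, q', -, hqq'⟩ := one_lt_card.1 (by rw [hcard i]; omega : 1 < #(C i))
  have : Nontrivial E := ⟨q, q', hqq'⟩
  have : Nontrivial ι := by
    rw [← Fintype.one_lt_card_iff_nontrivial, hι]
    exact Nat.succ_lt_succ finrank_pos
  have hcone (B : Finset E) (hB : IsRainbow C B) :
      hullIndicator 𝕜 p B = ∑ y ∈ B, hullIndicator 𝕜 p (insert q (B.erase y)) :=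
    hgen.hullIndicator_eq_sum (mem_biUnion.2 ⟨i, mem_univ i, hq⟩) hB.subset
      ((hB.card_eq hC).trans hι)
  exact even_ncard_isRainbowPartition (Q := fun B => p ∈ convexHull 𝕜 (B : Set E))
    (g := fun S => hullIndicator 𝕜 p (insert q S)) (by omega) hcard hC hcone

lemma GenPos.genPosAt {d : ℕ} (hd : 1 ≤ d) {p : Fin d → ℝ} {X : Finset (Fin d → ℝ)} (hpX : p ∉ X)
    (hgen : GenPos d (↑X ∪ {p})) : GenPosAt ℝ p X := by
  intro S hSX hS
  rw [finrank_fin_fun] at hS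
  have hspan : Submodule.span ℝ ((fun y => y - p) '' (S : Set (Fin d → ℝ))) = ⊤ := by
    by_contra hne
    obtain ⟨f, hf, hker⟩ := Submodule.exists_le_ker_of_lt_top _ (lt_top_iff_ne_top.2 hne)
    have hrank := Dual.finrank_ker_add_one_of_ne_zero (f := f) hf
    rw [finrank_fin_fun] at hrank
    refine hgen (d - 1) (by omega) (insert p S) ?_ ?_
      ⟨AffineSubspace.mk' p (LinearMap.ker f), ?_, ?_⟩
    · rw [coe_insert, Set.union_singleton]
      exact Set.insert_subset_insert (coe_subset.2 hSX)
    · rw [card_insert_of_notMem fun h => hpX (hSX h), hS]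
      omega
    · rw [AffineSubspace.direction_mk']
      omega
    · rw [coe_insert]
      refine Set.insert_subset (AffineSubspace.self_mem_mk' _ _) fun y hy => ?_
      exact AffineSubspace.mem_mk'.2 (hker (Submodule.subset_span ⟨y, hy, rfl⟩))
  refine linearIndependent_of_top_le_span_of_card_eq_finrank ?_ (by simp [hS])
  rw [← hspan, Set.image_eq_range]

lemma cBP_eq_ncard {d k : ℕ} (p : Fin d → ℝ) {C : Fin (d + 1) → Finset (Fin d → ℝ)}
    (hcard : ∀ i, #(C i) = k) (hC : Pairwise (Disjoint on C)) :
    cBP d k p (univ.biUnion C) C = (coloredBirchPartitions ℝ p C).ncard := by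
  refine congrArg Set.ncard (Set.ext fun P => ⟨?_, ?_⟩)
  · rintro ⟨-, hdisj, hunion, hblock⟩
    refine ⟨⟨hdisj, hunion, fun B hB => ⟨?_, (hblock B hB).2.1⟩⟩, fun B hB => (hblock B hB).2.2⟩
    exact hunion ▸ subset_biUnion_of_mem id hB
  · rintro ⟨hP, hp⟩
    refine ⟨(hP.card_eq 0).trans (hcard 0), hP.pairwiseDisjoint, hP.biUnion_eq, fun B hB => ?_⟩
    have hB' := hP.isRainbow B hB
    exact ⟨(hB'.card_eq hC).trans (Fintype.card_fin _), hB'.card_inter, hp B hB⟩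

/-- For `d ≥ 1` and `k ≥ d + 2`, if `X` is a set of `k(d+1)` points in `ℝ^d` partitioned
into `d + 1` color classes of exactly `k` points each, with `X ∪ {p}` in general position,
then the number of colored Birch partitions of `X` to `p` is even. -/
theorem cBP_even (d k : ℕ) (hd : 1 ≤ d) (hk : d + 2 ≤ k)
    (p : Fin d → ℝ) (X : Finset (Fin d → ℝ)) (C : Fin (d + 1) → Finset (Fin d → ℝ))
    (hXcard : X.card = k * (d + 1))
    (hccard : ∀ i : Fin (d + 1), (C i).card = k)
    (hcdisj : ∀ i j : Fin (d + 1), i ≠ j → Disjoint (C i) (C j))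
    (hX : X = Finset.univ.biUnion C)
    (hpX : p ∉ X)
    (hgen : GenPos d (↑X ∪ {p})) :
    Even (cBP d k p X C) := by
  subst hX
  rw [cBP_eq_ncard p hccard fun i j hij => hcdisj i j hij]
  exact cBP_even_general (by simp) (by simpa using hk) p C hccard (fun i j hij => hcdisj i j hij)
    (hgen.genPosAt hd hpX)
end

section
/- Let d = 2, let p ∈ ℝ², and let k ≥ 6. Let X be a set of 3k points in ℝ² partitioned into 3 color classes C_0, C_1, C_2 of exactly k points each, with X ∪ {p} in general position. If cBP_k(X) > 0, then cBP_k(X) ≥ 8 · 3^{k−6}. -/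
open scoped Classical

/-!
Fix a generic point `r`. A rainbow simplex contains `p` exactly when an odd number of its facets
span a cone with apex `p` that contains `r`. Each facet omits one color, so the indicator function
of the rainbow simplices containing `p` is a coboundary modulo 2. It follows that the number of
Birch partitions agreeing with a given one outside `n` of its blocks is even as soon as `n ≥ d + 2`,
so that rearranging these `n` blocks gives a second partition. If `n ≥ 2d + 3`, one of the blocks
even admits three different fillings: otherwise the blockwise median of three partitions is again
a partition, which contradicts the choice of a maximal set of blocks that cannot be rearranged.
Fixing the filling of one block at a time gains a factor 3 while `n ≥ 2d + 3` and a factor 2 while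
`n ≥ d + 2`.
-/

/-- A rainbow matching of `d + 1` copies (the colors) of `β`: a partition of `Fin (d + 1) × β` into
blocks containing every color once. Blocks are named by their point of color `0`, and `σ c b` is the
point of color `c + 1` in block `b`, so each partition is encoded exactly once. -/
abbrev RainbowMatching (d : ℕ) (β : Type*) := Fin d → Equiv.Perm β

/-- The indicator function of `K`, read modulo 2, is a sum of functions `h c`, each blind to the
coordinate `c`; that is, it is a coboundary over `ZMod 2` on the complete multipartite complex
whose color classes are copies of `β`. -/
def IsCoboundaryModTwo {ι β : Type*} [Fintype ι] (K : (ι → β) → Prop) : Prop :=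
  ∃ h : ι → (ι → β) → ZMod 2, (∀ c, DependsOn (h c) {c}ᶜ) ∧
    ∀ v, (if K v then 1 else 0) = ∑ c, h c v

namespace RainbowMatching

open Finset Equiv

variable {d : ℕ} {β : Type*}

/-- The block named `b`: its value at the color `c` is the point of color `c` in that block. -/
def block (σ : RainbowMatching d β) (b : β) : Fin (d + 1) → β :=
  fun c => (Fin.cons 1 σ : Fin (d + 1) → Perm β) c b

@[simp] lemma block_zero (σ : RainbowMatching d β) (b : β) : σ.block b 0 = b := rfl

@[simp] lemma block_succ (σ : RainbowMatching d β) (b : β) (c : Fin d) :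
    σ.block b c.succ = σ c b := rfl

lemma bijective_block (σ : RainbowMatching d β) (c : Fin (d + 1)) :
    Function.Bijective fun b => σ.block b c :=
  Equiv.bijective ((Fin.cons 1 σ : Fin (d + 1) → Perm β) c)

lemma block_eq_iff {σ τ : RainbowMatching d β} {b : β} :
    σ.block b = τ.block b ↔ ∀ c, σ c b = τ c b := by
  simp [funext_iff, Fin.forall_fin_succ]

lemma ext_block {σ τ : RainbowMatching d β} (h : ∀ b, σ.block b = τ.block b) : σ = τ :=
  funext fun c => Equiv.ext fun b => block_eq_iff.1 (h b) c

lemma eq_of_block_eq_of_ne {s t : RainbowMatching d β} {b : β}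
    (h : ∀ a ≠ b, t.block a = s.block a) : t = s := by
  have agree (c : Fin d) (a : β) (hab : a ≠ b) : t c a = s c a := block_eq_iff.1 (h a hab) c
  refine funext fun c => Equiv.ext fun a => ?_
  by_cases hab : a = b
  · subst hab
    obtain ⟨a', ha'⟩ := (s c).surjective (t c a)
    obtain rfl | hne := eq_or_ne a' a
    · exact ha'.symm
    · exact absurd ((t c).injective ((agree c a' hne).trans ha')) hne
  · exact agree c a hab

/-- The median of three rainbow matchings. Any two of its blocks occur together in one of the
three, by majority, so that it is again a rainbow matching. -/
lemma exists_median [Finite β] {s t u : RainbowMatching d β}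
    (htu : ∀ b, t.block b ≠ u.block b → s.block b = t.block b ∨ s.block b = u.block b) :
    ∃ m : RainbowMatching d β,
      ∀ b, m.block b = if t.block b = u.block b then t.block b else s.block b := by
  let m (c : Fin d) (b : β) : β := if t.block b = u.block b then t c b else s c b
  have two_votes (a b : β) :
      ∃ v : RainbowMatching d β, ∀ c, m c a = v c a ∧ m c b = v c b := by
    simp only [m]
    by_cases ha : t.block a = u.block a <;> by_cases hb : t.block b = u.block b
    · exact ⟨t, by simp [ha, hb]⟩
    · rcases htu b hb with h | h
      · exact ⟨t, by simp [ha, hb, block_eq_iff.1 h]⟩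
      · exact ⟨u, by simp [ha, hb, block_eq_iff.1 ha, block_eq_iff.1 h]⟩
    · rcases htu a ha with h | h
      · exact ⟨t, by simp [ha, hb, block_eq_iff.1 h]⟩
      · exact ⟨u, by simp [ha, hb, block_eq_iff.1 hb, block_eq_iff.1 h]⟩
    · exact ⟨s, by simp [ha, hb]⟩
  have hm (c : Fin d) : Function.Injective (m c) := fun a b hab => by
    obtain ⟨v, hv⟩ := two_votes a b
    rw [(hv c).1, (hv c).2] at hab
    exact (v c).injective hab
  refine ⟨fun c => Equiv.ofBijective (m c) (Finite.injective_iff_bijective.1 (hm c)), fun b => ?_⟩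
  split_ifs with h <;> exact block_eq_iff.2 fun c => by simp [m, h]

section Exchange

variable [DecidableEq β]

/-- The rearrangement `σ ↦ σ * exchange c i j` makes the blocks `i` and `j` trade their points of
color `c`. As blocks are named by their point of color `0`, for `c = 0` all other colors move. -/
def exchange (c : Fin (d + 1)) (i j : β) : RainbowMatching d β :=
  Fin.cases (fun _ => swap i j) (fun c' => Pi.mulSingle c' (swap i j)) c

lemma exchange_succ (c : Fin d) (i j : β) : exchange c.succ i j = Pi.mulSingle c (swap i j) := rfl

lemma exchange_mul_self (c : Fin (d + 1)) (i j : β) : exchange c i j * exchange c i j = 1 := by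
  cases c using Fin.cases with
  | zero => exact funext fun _ => swap_mul_self i j
  | succ c => rw [exchange_succ, ← Pi.mulSingle_mul, swap_mul_self, Pi.mulSingle_one]

lemma exchange_ne_one [NeZero d] (c : Fin (d + 1)) {i j : β} (hij : i ≠ j) :
    exchange c i j ≠ 1 := by
  have hswap : swap i j ≠ 1 := by simpa [swap_eq_one_iff] using hij
  cases c using Fin.cases with
  | zero => exact fun h => hswap (congrFun h 0)
  | succ c => rwa [exchange_succ, Ne, Pi.mulSingle_eq_one_iff]

lemma block_mul_exchange_of_ne (σ : RainbowMatching d β) (c : Fin (d + 1)) {i j b : β}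
    (hi : b ≠ i) (hj : b ≠ j) : (σ * exchange c i j).block b = σ.block b := by
  refine block_eq_iff.2 fun c' => congrArg (σ c') ?_
  cases c using Fin.cases with
  | zero => exact swap_apply_of_ne_of_ne hi hj
  | succ c =>
    obtain rfl | hc := eq_or_ne c' c
    · rw [exchange_succ, Pi.mulSingle_eq_same, swap_apply_of_ne_of_ne hi hj]
    · rw [exchange_succ, Pi.mulSingle_eq_of_ne hc, Perm.one_apply]

lemma prod_block_mul_exchange [Fintype β] {M : Type*} [CommMonoid M]
    {h : Fin (d + 1) → (Fin (d + 1) → β) → M} (hh : ∀ c, DependsOn (h c) {c}ᶜ)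
    {f : β → Fin (d + 1)} {i j : β} (hf : f i = f j) (σ : RainbowMatching d β) :
    ∏ b, h (f b) ((σ * exchange (f i) i j).block b) = ∏ b, h (f b) (σ.block b) := by
  generalize hc : f i = c
  have hfc {b : β} (hb : b = i ∨ b = j) : f b = c := by rcases hb with rfl | rfl <;> simp [← hc, hf]
  cases c using Fin.cases with
  | zero =>
    rw [← Equiv.prod_comp (swap i j) fun b => h (f b) (σ.block b)]
    refine prod_congr rfl fun b _ => ?_
    by_cases hb : b = i ∨ b = j
    · have hb' : swap i j b = i ∨ swap i j b = j := by rcases hb with rfl | rfl <;> simp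
      rw [hfc hb, hfc hb']
      refine hh 0 fun c' hc' => ?_
      obtain ⟨c', rfl⟩ := Fin.exists_succ_eq.2 hc'
      rfl
    · push Not at hb
      rw [block_mul_exchange_of_ne σ 0 hb.1 hb.2, swap_apply_of_ne_of_ne hb.1 hb.2]
  | succ c =>
    refine prod_congr rfl fun b _ => ?_
    by_cases hb : b = i ∨ b = j
    · rw [hfc hb]
      refine hh c.succ fun c' hc' => ?_
      cases c' using Fin.cases with
      | zero => rfl
      | succ c' =>
        have hne : c' ≠ c := fun h => hc' (congrArg Fin.succ h)
        simp only [block_succ, Pi.mul_apply, exchange_succ, Pi.mulSingle_eq_of_ne hne, mul_one]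
    · push Not at hb
      rw [block_mul_exchange_of_ne σ c.succ hb.1 hb.2]

end Exchange

section Solutions

variable [Fintype β] {K : (Fin (d + 1) → β) → Prop} {s t u : RainbowMatching d β}
  {F : Finset β} {b : β}

/-- The rainbow matchings all of whose blocks satisfy `K` and which agree with `s` outside the
blocks in `F`. -/
noncomputable def solutions (K : (Fin (d + 1) → β) → Prop) (s : RainbowMatching d β)
    (F : Finset β) : Finset (RainbowMatching d β) :=
  {t | (∀ b, K (t.block b)) ∧ ∀ b ∉ F, t.block b = s.block b}

lemma mem_solutions :
    t ∈ solutions K s F ↔ (∀ b, K (t.block b)) ∧ ∀ b ∉ F, t.block b = s.block b := by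
  simp [solutions]

lemma self_mem_solutions (hs : ∀ b, K (s.block b)) : s ∈ solutions K s F :=
  mem_solutions.2 ⟨hs, fun _ _ => rfl⟩

lemma solutions_subset {F' : Finset β} (ht : t ∈ solutions K s F) (hF : F' ⊆ F) :
    solutions K t F' ⊆ solutions K s F := fun u hu => by
  rw [mem_solutions] at ht hu ⊢
  exact ⟨hu.1, fun b hb => (hu.2 b fun h => hb (hF h)).trans (ht.2 b hb)⟩

/-- Expanding the product over the blocks of the sums `∑ c, h c`, each term repeats a color `c` on
two blocks of `F`, and trading their points of color `c` is a fixed-point-free involution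
preserving that term. -/
theorem even_card_solutions [NeZero d] (hK : IsCoboundaryModTwo K) (s : RainbowMatching d β)
    (hF : d + 1 < #F) : Even #(solutions K s F) := by
  obtain ⟨h, hh, hKh⟩ := hK
  let A : Finset (RainbowMatching d β) := {t | ∀ b ∉ F, t.block b = s.block b}
  have card_eq : (#(solutions K s F) : ZMod 2) = ∑ t ∈ A, ∏ b, ∑ c, h c (t.block b) := by
    simp_rw [← hKh, prod_boole, mem_univ, forall_true_left, sum_boole]
    congr 2
    ext t
    simp only [A, mem_solutions, mem_filter, mem_univ, true_and, and_comm]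
  rw [← ZMod.natCast_eq_zero_iff_even, card_eq]
  simp_rw [Fintype.prod_sum]
  rw [sum_comm]
  refine sum_eq_zero fun f _ => ?_
  obtain ⟨i, hi, j, hj, hij, hf⟩ := exists_ne_map_eq_of_card_lt_of_maps_to
    (t := univ) (f := f) (by simpa using hF) (fun _ _ => mem_coe.2 (mem_univ _))
  refine sum_involution (fun t _ => t * exchange (f i) i j) (fun t _ => ?_) (fun t _ _ => ?_)
    (fun t ht => ?_) (fun t _ => ?_)
  · rw [prod_block_mul_exchange hh hf, CharTwo.add_self_eq_zero]
  · simpa using exchange_ne_one (f i) hij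
  · simp only [A, mem_filter, mem_univ, true_and] at ht ⊢
    intro b hb
    rw [block_mul_exchange_of_ne t (f i) (ne_of_mem_of_not_mem hi hb).symm
      (ne_of_mem_of_not_mem hj hb).symm, ht b hb]
  · rw [mul_assoc, exchange_mul_self, mul_one]

lemma exists_mem_solutions_ne [NeZero d] (hK : IsCoboundaryModTwo K) (hs : ∀ b, K (s.block b))
    (hF : d + 1 < #F) : ∃ t ∈ solutions K s F, t ≠ s := by
  by_contra! hcon
  have hsingle : solutions K s F = {s} :=
    eq_singleton_iff_unique_mem.2 ⟨self_mem_solutions hs, hcon⟩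
  simpa [hsingle] using even_card_solutions hK s hF

lemma exists_one_lt_card_image_block [NeZero d] (hK : IsCoboundaryModTwo K)
    (hs : ∀ b, K (s.block b)) (hF : d + 1 < #F) :
    ∃ b ∈ F, 1 < #((solutions K s F).image fun t => t.block b) := by
  obtain ⟨t, ht, hts⟩ := exists_mem_solutions_ne hK hs hF
  obtain ⟨b, hb⟩ : ∃ b, t.block b ≠ s.block b := by
    by_contra! h
    exact hts (ext_block h)
  have hbF : b ∈ F := by
    by_contra h
    exact hb ((mem_solutions.1 ht).2 b h)
  exact ⟨b, hbF, one_lt_card.2 ⟨_, mem_image_of_mem _ ht, _,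
    mem_image_of_mem _ (self_mem_solutions hs), hb⟩⟩

/-- `s` is the only solution agreeing with `s` outside `F`. -/
def IsRigid (K : (Fin (d + 1) → β) → Prop) (s : RainbowMatching d β) (F : Finset β) : Prop :=
  ∀ t ∈ solutions K s F, t = s

lemma IsRigid.card_le [NeZero d] (hK : IsCoboundaryModTwo K) (hs : ∀ b, K (s.block b))
    (hF : IsRigid K s F) : #F ≤ d + 1 := by
  by_contra! h
  obtain ⟨t, ht, hts⟩ := exists_mem_solutions_ne hK hs h
  exact hts (hF t ht)

lemma exists_block_ne_of_not_isRigid_insert (h : ¬ IsRigid K s (insert b F)) :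
    ∃ t ∈ solutions K s (insert b F), ∃ a ∈ F, t.block a ≠ s.block a := by
  simp only [IsRigid, not_forall] at h
  obtain ⟨t, ht, hts⟩ := h
  refine ⟨t, ht, ?_⟩
  by_contra! hF
  refine hts (eq_of_block_eq_of_ne (b := b) fun a hab => ?_)
  by_cases ha : a ∈ F
  · exact hF a ha
  · exact (mem_solutions.1 ht).2 a (by simp [hab, ha])

/-- If no block name in `F` carries three different blocks, the median of `s` and two solutions `t`
and `u` is a solution; if `t` and `u` each move only one block outside the rigid set `M`, and not
the same one, their median with `s` moves none. -/
lemma IsRigid.block_eq_or_block_eq {M : Finset β} (hM : IsRigid K s M)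
    (hs : ∀ b, K (s.block b)) (hMF : M ⊆ F)
    (h2 : ∀ b ∈ F, #((solutions K s F).image fun t => t.block b) ≤ 2)
    {x y : β} (hx : x ∈ F) (hy : y ∈ F) (hxy : x ≠ y)
    (ht : t ∈ solutions K s (insert x M)) (hu : u ∈ solutions K s (insert y M)) (a : β) :
    t.block a = s.block a ∨ u.block a = s.block a := by
  have htF := solutions_subset (self_mem_solutions hs) (insert_subset hx hMF) ht
  have huF := solutions_subset (self_mem_solutions hs) (insert_subset hy hMF) hu
  have htu (b : β) (hb : t.block b ≠ u.block b) :
      s.block b = t.block b ∨ s.block b = u.block b := by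
    by_contra! hsb
    have hbF : b ∈ F := by
      by_contra hbF
      exact hsb.1 ((mem_solutions.1 htF).2 b hbF).symm
    exact (h2 b hbF).not_gt (two_lt_card.2 ⟨_, mem_image_of_mem _ (self_mem_solutions hs),
      _, mem_image_of_mem _ htF, _, mem_image_of_mem _ huF, hsb.1, hsb.2, hb⟩)
  obtain ⟨m, hm⟩ := exists_median htu
  have hmM : m ∈ solutions K s M := by
    refine mem_solutions.2 ⟨fun b => ?_, fun b hb => ?_⟩
    · rw [hm]
      split_ifs
      exacts [(mem_solutions.1 ht).1 b, hs b]
    · rw [hm]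
      split_ifs with heq
      · obtain rfl | hbx := eq_or_ne b x
        · rw [heq]
          exact (mem_solutions.1 hu).2 b (by simp [hb, hxy])
        · exact (mem_solutions.1 ht).2 b (by simp [hb, hbx])
      · rfl
  by_contra! hne
  by_cases heq : t.block a = u.block a
  · refine hne.1 ?_
    rw [← if_pos (c := t.block a = u.block a) heq (t := t.block a) (e := s.block a), ← hm, hM m hmM]
  · exact (htu a heq).elim (fun h => hne.1 h.symm) (fun h => hne.2 h.symm)

/-- A maximal rigid subset `M` of `F` has at most `d + 1` elements. Each of the more than `d + 1`
names in `F \ M` can be freed so that some block of `M` moves, and by pigeonhole two of them move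
the same block of `M`. -/
theorem exists_two_lt_card_image_block [NeZero d] (hK : IsCoboundaryModTwo K)
    (hs : ∀ b, K (s.block b)) (hF : 2 * (d + 1) < #F) :
    ∃ b ∈ F, 2 < #((solutions K s F).image fun t => t.block b) := by
  by_contra! h2
  have rigid_empty : IsRigid K s ∅ := fun t ht =>
    ext_block fun b => (mem_solutions.1 ht).2 b (notMem_empty b)
  obtain ⟨M, hM⟩ := (F.powerset.filter (IsRigid K s)).exists_maximal ⟨∅, by simpa using rigid_empty⟩
  obtain ⟨hMF, hMrigid⟩ : M ⊆ F ∧ IsRigid K s M := by simpa using hM.prop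
  have moves (x : β) (hx : x ∈ F \ M) : ∃ a ∈ M, ∃ t ∈ solutions K s (insert x M),
      t.block a ≠ s.block a := by
    rw [mem_sdiff] at hx
    have hnot : ¬ IsRigid K s (insert x M) := fun h =>
      hx.2 (hM.le_of_ge (by simpa using ⟨insert_subset hx.1 hMF, h⟩) (subset_insert x M)
        (mem_insert_self x M))
    obtain ⟨t, ht, a, ha, hne⟩ := exists_block_ne_of_not_isRigid_insert hnot
    exact ⟨a, ha, t, ht, hne⟩
  have hcard : #M < #(F \ M) := by
    have := hMrigid.card_le hK hs
    rw [card_sdiff_of_subset hMF]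
    omega
  have : Nonempty β := (card_pos.1 (pos_of_gt hF)).to_type
  choose! f hfM t ht htf using moves
  obtain ⟨x, hx, y, hy, hxy, hfxy⟩ := exists_ne_map_eq_of_card_lt_of_maps_to hcard hfM
  rcases hMrigid.block_eq_or_block_eq hs hMF h2 (mem_sdiff.1 hx).1 (mem_sdiff.1 hy).1 hxy
    (ht x hx) (ht y hy) (f x) with h | h
  · exact htf x hx h
  · exact htf y hy (hfxy ▸ h)

lemma mul_card_image_block_le {n : ℕ}
    (hn : ∀ t ∈ solutions K s F, n ≤ #(solutions K t (F.erase b))) :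
    n * #((solutions K s F).image fun t => t.block b) ≤ #(solutions K s F) := by
  refine mul_card_image_le_card _ n fun v hv => ?_
  obtain ⟨t, ht, rfl⟩ := mem_image.1 hv
  refine (hn t ht).trans (card_le_card fun u hu => mem_filter.2
    ⟨solutions_subset ht (erase_subset b F) hu, ?_⟩)
  exact (mem_solutions.1 hu).2 b (notMem_erase b F)

theorem le_card_solutions [NeZero d] (hK : IsCoboundaryModTwo K) (hs : ∀ b, K (s.block b)) :
    2 ^ min (#F - (d + 1)) (d + 1) * 3 ^ (#F - 2 * (d + 1)) ≤ #(solutions K s F) := by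
  induction hn : #F generalizing F s with
  | zero => simpa using ⟨s, self_mem_solutions hs⟩
  | succ n ih =>
    have descend (r : ℕ) (hr : ∃ b ∈ F, r < #((solutions K s F).image fun t => t.block b)) :
        2 ^ min (n - (d + 1)) (d + 1) * 3 ^ (n - 2 * (d + 1)) * (r + 1) ≤ #(solutions K s F) := by
      obtain ⟨b, hb, hrb⟩ := hr
      refine (Nat.mul_le_mul_left _ hrb).trans (mul_card_image_block_le fun t ht => ?_)
      exact ih (mem_solutions.1 ht).1 (by rw [card_erase_of_mem hb, hn, Nat.add_sub_cancel])
    rcases le_or_gt (n + 1) (d + 1) with hsmall | hd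
    · rw [Nat.sub_eq_zero_of_le hsmall, Nat.sub_eq_zero_of_le (by omega)]
      simpa using ⟨s, self_mem_solutions hs⟩
    have hsucc : n + 1 - (d + 1) = n - (d + 1) + 1 := by omega
    rcases le_or_gt (n + 1) (2 * (d + 1)) with hmedium | hlarge
    · have hmin : min (n - (d + 1) + 1) (d + 1) = min (n - (d + 1)) (d + 1) + 1 := by omega
      have h3 : n + 1 - 2 * (d + 1) = n - 2 * (d + 1) := by omega
      rw [hsucc, hmin, h3, pow_succ, mul_right_comm]
      exact descend 1 (exists_one_lt_card_image_block hK hs (hn ▸ hd))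
    · have hmin : min (n - (d + 1) + 1) (d + 1) = min (n - (d + 1)) (d + 1) := by omega
      have h3 : n + 1 - 2 * (d + 1) = n - 2 * (d + 1) + 1 := by omega
      rw [hsucc, hmin, h3, pow_succ, ← mul_assoc]
      exact descend 2 (exists_two_lt_card_image_block hK hs (hn ▸ hlarge))

end Solutions

end RainbowMatching

section FacetCones

open Finset

variable {ι : Type*} [Fintype ι]

section Separating

variable {α : Type*} [LinearOrder α] {ρ : ι → α}

lemma card_filter_forall_le [Nonempty ι] (hρ : Function.Injective ρ) :
    #{c | ∀ j, ρ c ≤ ρ j} = 1 := by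
  obtain ⟨x, hx⟩ := Finite.exists_min ρ
  refine card_eq_one.2 ⟨x, ?_⟩
  ext c
  rw [mem_filter_univ, mem_singleton]
  exact ⟨fun hc => hρ ((hc x).antisymm (hx c)), fun hc => hc ▸ hx⟩

/-- Only the minimum of `ρ` on `P` and its maximum off `P` can be counted, and either both are or
neither is. -/
lemma even_card_separating (hρ : Function.Injective ρ) {P : ι → Prop} [DecidablePred P]
    (hP : ∃ j, P j) (hnP : ∃ j, ¬ P j) :
    Even #{c | (∀ j, P j → ρ c ≤ ρ j) ∧ ∀ j, ¬ P j → ρ j ≤ ρ c} := by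
  obtain ⟨x, hx, hxmin⟩ := exists_min_image {j | P j} ρ (by simpa [Finset.Nonempty] using hP)
  obtain ⟨y, hy, hymax⟩ := exists_max_image {j | ¬ P j} ρ (by simpa [Finset.Nonempty] using hnP)
  simp only [mem_filter_univ] at hx hxmin hy hymax
  by_cases hyx : ρ y ≤ ρ x
  · have hpair : ({c | (∀ j, P j → ρ c ≤ ρ j) ∧ ∀ j, ¬ P j → ρ j ≤ ρ c} : Finset ι) = {x, y} := by
      ext c
      simp only [mem_filter_univ, mem_insert, mem_singleton]
      constructor
      · rintro ⟨hle, hge⟩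
        by_cases hc : P c
        · exact Or.inl (hρ ((hle x hx).antisymm (hxmin c hc)))
        · exact Or.inr (hρ ((hymax c hc).antisymm (hge y hy)))
      · rintro (rfl | rfl)
        · exact ⟨hxmin, fun j hj => (hymax j hj).trans hyx⟩
        · exact ⟨fun j hj => hyx.trans (hxmin j hj), hymax⟩
    rw [hpair, card_pair fun h : x = y => hy (h ▸ hx)]
    exact even_two
  · rw [filter_eq_empty_iff.2 fun c _ hc => hyx ((hc.2 y hy).trans (hc.1 x hx)), card_empty]
    exact Even.zero

lemma odd_card_separating_iff [Nonempty ι] (hρ : Function.Injective ρ) (P : ι → Prop)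
    [DecidablePred P] :
    Odd #{c | (∀ j, P j → ρ c ≤ ρ j) ∧ ∀ j, ¬ P j → ρ j ≤ ρ c} ↔ (∀ j, P j) ∨ ∀ j, ¬ P j := by
  refine ⟨fun hodd => ?_, ?_⟩
  · contrapose! hodd
    exact Nat.not_odd_iff_even.2 (even_card_separating hρ hodd.2 hodd.1)
  · rintro (hP | hP)
    · simpa [hP] using card_filter_forall_le hρ ▸ odd_one
    · simpa [hP] using card_filter_forall_le (α := αᵒᵈ) hρ ▸ odd_one

end Separating

section Dependence

variable {𝕜 E : Type*} [Field 𝕜] [AddCommGroup E] [Module 𝕜 E] {v : ι → E}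

lemma eq_zero_of_sum_smul_eq_zero {c : ι} (hv : LinearIndepOn 𝕜 v {c}ᶜ) {w : ι → 𝕜}
    (hw : ∑ j, w j • v j = 0) (hwc : w c = 0) : w = 0 := by
  have hv' : LinearIndepOn 𝕜 v ↑(univ.erase c) := by simpa [Set.compl_eq_univ_sdiff] using hv
  have hsum : ∑ j ∈ univ.erase c, w j • v j = 0 := by
    rwa [sum_erase _ (by rw [hwc, zero_smul])]
  funext j
  obtain rfl | hj := eq_or_ne j c
  · exact hwc
  · exact linearIndepOn_finset_iff.1 hv' w hsum j (mem_erase.2 ⟨hj, mem_univ j⟩)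

lemma exists_sum_smul_eq_zero [FiniteDimensional 𝕜 E]
    (hcard : Fintype.card ι = Module.finrank 𝕜 E + 1) (hv : ∀ c, LinearIndepOn 𝕜 v {c}ᶜ) :
    ∃ a : ι → 𝕜, ∑ j, a j • v j = 0 ∧ ∀ j, a j ≠ 0 := by
  have hdep : ¬ LinearIndependent 𝕜 v := fun h => by
    have := h.fintype_card_le_finrank
    omega
  obtain ⟨a, ha, i, hi⟩ := Fintype.not_linearIndependent_iff.1 hdep
  exact ⟨a, ha, fun j hj => hi (congrFun (eq_zero_of_sum_smul_eq_zero (hv j) ha hj) i)⟩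

lemma exists_sum_smul_eq [FiniteDimensional 𝕜 E] (hcard : Fintype.card ι = Module.finrank 𝕜 E + 1)
    {c : ι} (hv : LinearIndepOn 𝕜 v {c}ᶜ) (r : E) : ∃ b : ι → 𝕜, ∑ j, b j • v j = r := by
  have hspan := hv.linearIndependent.span_eq_top_of_card_eq_finrank' (by
    rw [Fintype.card_compl_set, Set.card_singleton, hcard, Nat.add_sub_cancel])
  rw [← Submodule.mem_span_range_iff_exists_fun]
  refine Submodule.span_mono ?_ (hspan ▸ Submodule.mem_top : r ∈ _)
  rintro _ ⟨j, rfl⟩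
  exact ⟨j, rfl⟩

variable {a b w : ι → 𝕜} {r : E}

lemma eq_smul_of_sum_smul_eq_zero {c : ι} (hv : LinearIndepOn 𝕜 v {c}ᶜ)
    (ha : ∑ j, a j • v j = 0) (hac : a c ≠ 0) (hw : ∑ j, w j • v j = 0) :
    w = (w c / a c) • a := by
  refine sub_eq_zero.1 (eq_zero_of_sum_smul_eq_zero hv ?_ (by simp [hac]))
  simp [sub_smul, mul_smul, ← smul_sum, ha, hw]

lemma eq_mul_div_sub_div {c : ι} (hv : LinearIndepOn 𝕜 v {c}ᶜ) (ha : ∑ j, a j • v j = 0)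
    (ha0 : ∀ j, a j ≠ 0) (hb : ∑ j, b j • v j = r) (hw : ∑ j, w j • v j = r) (hwc : w c = 0)
    (j : ι) : w j = a j * (b j / a j - b c / a c) := by
  have hdiff := congrFun (eq_smul_of_sum_smul_eq_zero hv ha (ha0 c) (w := b - w)
    (by simp [sub_smul, hb, hw])) j
  simp only [Pi.sub_apply, Pi.smul_apply, smul_eq_mul, hwc, sub_zero] at hdiff
  rw [mul_sub, mul_div_cancel₀ _ (ha0 j)]
  linear_combination -hdiff

lemma sum_mul_div_sub_div (ha : ∑ j, a j • v j = 0) (ha0 : ∀ j, a j ≠ 0)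
    (hb : ∑ j, b j • v j = r) (t : 𝕜) : ∑ j, (a j * (b j / a j - t)) • v j = r := by
  have hterm (j : ι) : (a j * (b j / a j - t)) • v j = b j • v j - t • a j • v j := by
    rw [mul_sub, mul_div_cancel₀ _ (ha0 j)]
    module
  simp_rw [hterm, sum_sub_distrib, ← smul_sum, hb, ha, smul_zero, sub_zero]

lemma ne_of_notMem_span_compl_pair (ha : ∑ j, a j • v j = 0) (ha0 : ∀ j, a j ≠ 0)
    (hb : ∑ j, b j • v j = r) {i j : ι} (hr : r ∉ Submodule.span 𝕜 (v '' {i, j}ᶜ)) :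
    b i / a i ≠ b j / a j := by
  refine fun hij => hr ?_
  rw [← sum_mul_div_sub_div ha ha0 hb (b i / a i)]
  refine Submodule.sum_mem _ fun l _ => ?_
  by_cases hl : l ∈ ({i, j} : Set ι)
  · obtain rfl | rfl := hl <;> simp [hij]
  · exact Submodule.smul_mem _ _ (Submodule.subset_span (Set.mem_image_of_mem v hl))

lemma exists_notMem_span_compl_pair [Infinite 𝕜] {κ : Type*} [Finite κ] (v : κ → ι → E)
    (hcard : Fintype.card ι = Module.finrank 𝕜 E + 1) :
    ∃ r : E, ∀ (l : κ) (i j : ι), i ≠ j → r ∉ Submodule.span 𝕜 (v l '' {i, j}ᶜ) := by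
  by_contra! h
  let W (q : {q : κ × ι × ι // q.2.1 ≠ q.2.2}) : Submodule 𝕜 E :=
    Submodule.span 𝕜 (v q.1.1 '' {q.1.2.1, q.1.2.2}ᶜ)
  obtain ⟨⟨⟨l, i, j⟩, hij⟩, htop⟩ : ∃ q, W q = ⊤ := by
    refine Subspace.exists_eq_top_of_iUnion_eq_univ (Set.eq_univ_of_forall fun r => ?_)
    obtain ⟨l, i, j, hij, hr⟩ := h r
    exact Set.mem_iUnion.2 ⟨⟨⟨l, i, j⟩, hij⟩, hr⟩
  have hspan : Submodule.span 𝕜 (↑(({i, j} : Finset ι)ᶜ.image (v l)) : Set E) = ⊤ := by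
    rwa [coe_image, coe_compl, coe_pair]
  have hle := (finrank_span_finset_le_card (R := 𝕜) (({i, j} : Finset ι)ᶜ.image (v l))).trans
    card_image_le
  rw [Set.finrank, hspan, finrank_top, card_compl, card_pair hij, hcard] at hle
  have htwo : 2 ≤ Fintype.card ι := card_pair hij ▸ card_le_univ {i, j}
  omega

end Dependence

variable {𝕜 E : Type*} [Field 𝕜] [LinearOrder 𝕜] [AddCommGroup E] [Module 𝕜 E]

/-- `r` lies in the convex cone spanned by the vectors `v j` with `j ≠ c`. -/
def MemFacetCone (𝕜 : Type*) {E : Type*} [Field 𝕜] [LinearOrder 𝕜] [AddCommGroup E] [Module 𝕜 E]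
    (v : ι → E) (r : E) (c : ι) : Prop :=
  ∃ w : ι → 𝕜, (∀ j, 0 ≤ w j) ∧ w c = 0 ∧ ∑ j, w j • v j = r

lemma dependsOn_memFacetCone (r : E) (c : ι) : DependsOn (fun v => MemFacetCone 𝕜 v r c) {c}ᶜ := by
  intro v v' h
  have hterm {w : ι → 𝕜} (hwc : w c = 0) (j : ι) : w j • v j = w j • v' j := by
    obtain rfl | hj := eq_or_ne j c
    · simp [hwc]
    · rw [h j hj]
  refine propext (exists_congr fun w => and_congr_right fun _ => and_congr_right fun hwc => ?_)
  rw [sum_congr rfl fun j _ => hterm hwc j]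

variable [IsStrictOrderedRing 𝕜]

lemma mem_convexHull_range_iff_exists_sum_smul_sub {x : ι → E} {p : E} :
    p ∈ convexHull 𝕜 (Set.range x) ↔
      ∃ w : ι → 𝕜, (∀ j, 0 ≤ w j) ∧ w ≠ 0 ∧ ∑ j, w j • (x j - p) = 0 := by
  constructor
  · have hrange : Set.range x =
        Fintype.linearCombination 𝕜 x '' Set.range fun i : ι => Pi.single i 1 := by
      rw [← Set.range_comp]
      congr 1
      funext i
      simp
    rw [hrange, ← LinearMap.image_convexHull, convexHull_rangle_single_eq_stdSimplex]
    rintro ⟨w, ⟨hw0, hw1⟩, rfl⟩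
    refine ⟨w, hw0, fun h => by simp [h] at hw1, ?_⟩
    simp [Fintype.linearCombination_apply, smul_sub, ← sum_smul, hw1]
  · rintro ⟨w, hw0, hw, hsum⟩
    have hpos : 0 < ∑ j, w j := Fintype.sum_pos (lt_of_le_of_ne hw0 hw.symm)
    convert! univ.centerMass_mem_convexHull (fun j _ => hw0 j) hpos fun j _ => Set.mem_range_self j
    simp_rw [smul_sub, sum_sub_distrib, ← sum_smul, sub_eq_zero] at hsum
    rw [centerMass, hsum, inv_smul_smul₀ hpos.ne']

variable {v : ι → E} {a b : ι → 𝕜} {r : E}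

/-- The solutions `w` of `∑ j, w j • v j = r` are the `b - t • a`, and `w c = 0` forces
`t = b c / a c`. -/
lemma memFacetCone_iff (hv : ∀ c, LinearIndepOn 𝕜 v {c}ᶜ) (ha : ∑ j, a j • v j = 0)
    (ha0 : ∀ j, a j ≠ 0) (hb : ∑ j, b j • v j = r) (c : ι) :
    MemFacetCone 𝕜 v r c ↔ (∀ j, 0 < a j → b c / a c ≤ b j / a j) ∧
      ∀ j, ¬ 0 < a j → b j / a j ≤ b c / a c := by
  have hsign : MemFacetCone 𝕜 v r c ↔ ∀ j, 0 ≤ a j * (b j / a j - b c / a c) := by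
    constructor
    · rintro ⟨w, hw0, hwc, hw⟩ j
      exact eq_mul_div_sub_div (hv c) ha ha0 hb hw hwc j ▸ hw0 j
    · exact fun h => ⟨_, h, by simp, sum_mul_div_sub_div ha ha0 hb _⟩
  rw [hsign, ← forall_and]
  refine forall_congr' fun j => ?_
  rcases (ha0 j).lt_or_gt with hj | hj
  · rw [← neg_mul_neg, mul_nonneg_iff_of_pos_left (neg_pos.2 hj)]
    simp [hj.not_gt]
  · simp [hj, mul_nonneg_iff_of_pos_left hj]

lemma mem_convexHull_range_iff_sign [Nonempty ι] {x : ι → E} {p : E}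
    (hv : ∀ c, LinearIndepOn 𝕜 (fun j => x j - p) {c}ᶜ) (ha : ∑ j, a j • (x j - p) = 0)
    (ha0 : ∀ j, a j ≠ 0) :
    p ∈ convexHull 𝕜 (Set.range x) ↔ (∀ j, 0 < a j) ∨ ∀ j, ¬ 0 < a j := by
  rw [mem_convexHull_range_iff_exists_sum_smul_sub]
  constructor
  · rintro ⟨w, hw0, hw, hsum⟩
    obtain ⟨t, rfl⟩ : ∃ t : 𝕜, w = t • a :=
      ⟨_, eq_smul_of_sum_smul_eq_zero (hv (Classical.arbitrary ι)) ha (ha0 _) hsum⟩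
    have ht : t ≠ 0 := fun h => hw (by simp [h])
    rcases ht.lt_or_gt with ht | ht
    · exact Or.inr fun j hj => (mul_neg_of_neg_of_pos ht hj).not_ge (hw0 j)
    · exact Or.inl fun j => (nonneg_of_mul_nonneg_right (hw0 j) ht).lt_of_ne' (ha0 j)
  · rintro (h | h)
    · exact ⟨a, fun j => (h j).le, fun h0 => ha0 (Classical.arbitrary ι) (congrFun h0 _), ha⟩
    · exact ⟨-a, fun j => neg_nonneg.2 (not_lt.1 (h j)),
        fun h0 => ha0 (Classical.arbitrary ι) (neg_eq_zero.1 (congrFun h0 _)), by simp [ha]⟩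

theorem odd_card_memFacetCone_iff [FiniteDimensional 𝕜 E]
    (hcard : Fintype.card ι = Module.finrank 𝕜 E + 1) {x : ι → E} {p : E}
    (hv : ∀ c, LinearIndepOn 𝕜 (fun j => x j - p) {c}ᶜ)
    (hr : ∀ i j, i ≠ j → r ∉ Submodule.span 𝕜 ((fun j => x j - p) '' {i, j}ᶜ)) :
    Odd #{c | MemFacetCone 𝕜 (fun j => x j - p) r c} ↔ p ∈ convexHull 𝕜 (Set.range x) := by
  have : Nonempty ι := Fintype.card_pos_iff.1 (by omega)
  obtain ⟨a, ha, ha0⟩ := exists_sum_smul_eq_zero hcard hv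
  obtain ⟨b, hb⟩ := exists_sum_smul_eq hcard (hv (Classical.arbitrary ι)) r
  have hρ : Function.Injective fun j => b j / a j := fun i j hij => by
    by_contra hne
    exact ne_of_notMem_span_compl_pair ha ha0 hb (hr i j hne) hij
  rw [mem_convexHull_range_iff_sign hv ha ha0, ← odd_card_separating_iff hρ,
    filter_congr fun c _ => memFacetCone_iff hv ha ha0 hb c]

theorem isCoboundaryModTwo_mem_convexHull_range [FiniteDimensional 𝕜 E]
    (hcard : Fintype.card ι = Module.finrank 𝕜 E + 1) {β : Type*} [Finite β]
    {x : ι → β → E} {p : E}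
    (hx : ∀ (u : ι → β) (c : ι), LinearIndepOn 𝕜 (fun j => x j (u j) - p) {c}ᶜ) :
    IsCoboundaryModTwo fun u : ι → β => p ∈ convexHull 𝕜 (Set.range fun j => x j (u j)) := by
  obtain ⟨r, hr⟩ :=
    exists_notMem_span_compl_pair (𝕜 := 𝕜) (fun (u : ι → β) j => x j (u j) - p) hcard
  refine ⟨fun c u => if MemFacetCone 𝕜 (fun j => x j (u j) - p) r c then 1 else 0,
    fun c u u' h => ?_, fun u => ?_⟩
  · have hdep := dependsOn_memFacetCone (𝕜 := 𝕜) r c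
      (x := fun j => x j (u j) - p) (y := fun j => x j (u' j) - p) fun j hj => by rw [h j hj]
    simp only [hdep]
  · have hodd := odd_card_memFacetCone_iff hcard (hx u) (hr u)
    rw [sum_boole]
    split_ifs with hp
    · exact (ZMod.natCast_eq_one_iff_odd.2 (hodd.2 hp)).symm
    · exact (ZMod.natCast_eq_zero_iff_even.2 (Nat.not_odd_iff_even.1 (mt hodd.1 hp))).symm

end FacetCones

lemma GenPos.linearIndependent_sub {d : ℕ} {P : Set (Fin d → ℝ)} (hP : GenPos d P)
    {p : Fin d → ℝ} (hp : p ∈ P) {κ : Type*} [Fintype κ] {f : κ → Fin d → ℝ}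
    (hf : Function.Injective f) (hfP : ∀ i, f i ∈ P) (hfp : ∀ i, f i ≠ p)
    (hcard : Fintype.card κ = d) : LinearIndependent ℝ fun i => f i - p := by
  by_contra hdep
  have hlt : Submodule.span ℝ (Set.range fun i => f i - p) < ⊤ := by
    refine lt_top_iff_ne_top.2 fun htop => hdep ?_
    exact linearIndependent_of_top_le_span_of_card_eq_finrank htop.ge (by simpa using hcard)
  obtain ⟨φ, hφ, hle⟩ := Submodule.exists_le_ker_of_lt_top _ hlt
  have hrank := Module.Dual.finrank_ker_add_one_of_ne_zero hφ
  rw [Module.finrank_fin_fun] at hrank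
  refine hP (d - 1) (by omega) (insert p (Finset.univ.image f)) ?_ ?_
    ⟨AffineSubspace.mk' p φ.ker, ?_, ?_⟩
  · simpa [Set.insert_subset_iff, Set.range_subset_iff] using ⟨hp, hfP⟩
  · rw [Finset.card_insert_of_notMem (by simpa using hfp), Finset.card_image_of_injective _ hf,
      Finset.card_univ]
    omega
  · rw [AffineSubspace.direction_mk']
    omega
  · have hker (i : κ) : φ (f i - p) = 0 := hle (Submodule.subset_span ⟨i, rfl⟩)
    simpa [Set.insert_subset_iff, Set.range_subset_iff, AffineSubspace.mem_mk'] using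
      fun i => by simpa using hker i

lemma GenPos.isCoboundaryModTwo_mem_convexHull {d : ℕ} {P : Set (Fin d → ℝ)} (hP : GenPos d P)
    {p : Fin d → ℝ} (hp : p ∈ P) {β : Type*} [Finite β] {x : Fin (d + 1) → β → Fin d → ℝ}
    (hx : Function.Injective (Function.uncurry x)) (hxP : ∀ c j, x c j ∈ P)
    (hxp : ∀ c j, x c j ≠ p) :
    IsCoboundaryModTwo fun u => p ∈ convexHull ℝ (Set.range fun c => x c (u c)) := by
  refine isCoboundaryModTwo_mem_convexHull_range (by simp) fun u c => ?_
  refine hP.linearIndependent_sub hp (f := fun j : ({c}ᶜ : Set _) => x j (u j)) (fun i j h => ?_)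
    (fun j => hxP _ _) (fun j => hxp _ _) ?_
  · exact Subtype.ext (congrArg Prod.fst (@hx (_, _) (_, _) h))
  · rw [Fintype.card_compl_set]
    simp

namespace RainbowMatching

open Finset

section BlockPoints

variable {d : ℕ} {β E : Type*} [DecidableEq E] {pt : Fin (d + 1) → β → E}
  {σ τ : RainbowMatching d β} {b b' : β}

/-- The block named `b` as a set of points, where `pt c j` is the point of color `c` with label
`j`. -/
def blockPoints (pt : Fin (d + 1) → β → E) (σ : RainbowMatching d β) (b : β) :
    Finset E :=
  univ.image fun c => pt c (σ.block b c)

lemma coe_blockPoints :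
    (σ.blockPoints pt b : Set E) = Set.range fun c => pt c (σ.block b c) := by
  simp [blockPoints]

lemma mem_blockPoints (hpt : Function.Injective (Function.uncurry pt)) {c : Fin (d + 1)} {j : β} :
    pt c j ∈ σ.blockPoints pt b ↔ σ.block b c = j := by
  simp only [blockPoints, mem_image, mem_univ, true_and]
  refine ⟨fun ⟨_, h⟩ => ?_, fun h => ⟨c, by rw [h]⟩⟩
  obtain ⟨rfl, h⟩ := Prod.ext_iff.1 (@hpt (_, _) (c, j) h)
  exact h

lemma card_blockPoints (hpt : Function.Injective (Function.uncurry pt)) :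
    #(σ.blockPoints pt b) = d + 1 := by
  rw [blockPoints, card_image_of_injective, card_univ, Fintype.card_fin]
  exact fun c c' h => congrArg Prod.fst (@hpt (c, _) (c', _) h)

lemma block_eq_of_blockPoints_eq (hpt : Function.Injective (Function.uncurry pt))
    (h : σ.blockPoints pt b = τ.blockPoints pt b') : σ.block b = τ.block b' :=
  funext fun _ => ((mem_blockPoints hpt).1 (h ▸ (mem_blockPoints hpt).2 rfl)).symm

lemma injective_blockPoints (hpt : Function.Injective (Function.uncurry pt)) :
    Function.Injective (σ.blockPoints pt) := fun _ _ h =>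
  congrFun (block_eq_of_blockPoints_eq hpt h) 0

lemma disjoint_blockPoints (hpt : Function.Injective (Function.uncurry pt)) (hb : b ≠ b') :
    Disjoint (σ.blockPoints pt b) (σ.blockPoints pt b') := by
  refine disjoint_left.2 fun v hv hv' => hb ?_
  obtain ⟨c, -, rfl⟩ := mem_image.1 hv
  exact (σ.bijective_block c).1 ((mem_blockPoints hpt).1 hv').symm

variable [Fintype β]

lemma card_blockPoints_inter (hpt : Function.Injective (Function.uncurry pt)) (c : Fin (d + 1)) :
    #(σ.blockPoints pt b ∩ univ.image (pt c)) = 1 := by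
  refine card_eq_one.2 ⟨pt c (σ.block b c), ext fun v => ?_⟩
  simp only [mem_inter, mem_image, mem_univ, true_and, mem_singleton]
  constructor
  · rintro ⟨hv, j, rfl⟩
    rw [(mem_blockPoints hpt).1 hv]
  · rintro rfl
    exact ⟨(mem_blockPoints hpt).2 rfl, _, rfl⟩

lemma biUnion_blockPoints :
    univ.biUnion (σ.blockPoints pt) = univ.biUnion fun c => univ.image (pt c) := by
  ext v
  simp only [blockPoints, mem_biUnion, mem_image, mem_univ, true_and]
  rw [exists_comm]
  exact exists_congr fun c => ((σ.bijective_block c).2.exists (p := fun j => pt c j = v)).symm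

/-- The partition of the points `pt c j` encoded by `σ`. -/
def partition (pt : Fin (d + 1) → β → E) (σ : RainbowMatching d β) :
    Finset (Finset E) :=
  univ.image (σ.blockPoints pt)

lemma injective_partition (hpt : Function.Injective (Function.uncurry pt)) :
    Function.Injective (partition (d := d) (β := β) pt) := fun σ τ h =>
  ext_block fun b => by
    have hb : σ.blockPoints pt b ∈ τ.partition pt := h ▸ mem_image_of_mem _ (mem_univ b)
    obtain ⟨b', -, hb'⟩ := mem_image.1 hb
    have hblock := block_eq_of_blockPoints_eq hpt hb'
    obtain rfl : b' = b := congrFun hblock 0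
    exact hblock.symm

/-- Sending `j` to the part containing `pt c j` identifies the labels with the parts, for each color
`c`; comparing these identifications with the one for color `0` gives the matching. -/
lemma exists_partition_eq (hpt : Function.Injective (Function.uncurry pt)) {P : Finset (Finset E)}
    (hPcard : #P = Fintype.card β) (hcover : ∀ c j, ∃ B ∈ P, pt c j ∈ B)
    (hBcard : ∀ B ∈ P, #B = d + 1) (hinter : ∀ B ∈ P, ∀ c, #(B ∩ univ.image (pt c)) = 1) :
    ∃ σ : RainbowMatching d β, σ.partition pt = P := by
  choose part hpartP hpart using hcover
  have part_inj (c : Fin (d + 1)) : Function.Injective (part c) := fun j j' h => by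
    have heq := card_le_one.1 (hinter _ (hpartP c j) c).le (pt c j) (by simp [hpart])
      (pt c j') (by simp [h, hpart])
    exact congrArg Prod.snd (@hpt (c, j) (c, j') heq)
  have part_bij (c : Fin (d + 1)) :
      Function.Bijective fun j => (⟨part c j, hpartP c j⟩ : P) :=
    (Fintype.bijective_iff_injective_and_card _).2
      ⟨fun j j' h => part_inj c (congrArg Subtype.val h), by simp [hPcard]⟩
  let e (c : Fin (d + 1)) : β ≃ P := Equiv.ofBijective _ (part_bij c)
  let σ : RainbowMatching d β := fun c => (e 0).trans (e c.succ).symm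
  have block_σ (b : β) (c : Fin (d + 1)) : σ.block b c = (e c).symm (e 0 b) := by
    cases c using Fin.cases <;> simp [σ]
  have blockPoints_σ (b : β) : σ.blockPoints pt b = part 0 b := by
    refine eq_of_subset_of_card_le (image_subset_iff.2 fun c _ => ?_) ?_
    · have hpart_eq : part c (σ.block b c) = part 0 b := by
        rw [block_σ]
        exact congrArg Subtype.val ((e c).apply_symm_apply (e 0 b))
      exact hpart_eq ▸ hpart c _
    · rw [card_blockPoints hpt, hBcard _ (hpartP 0 b)]
  refine ⟨σ, eq_of_subset_of_card_le (image_subset_iff.2 fun b _ => ?_) ?_⟩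
  · exact blockPoints_σ b ▸ hpartP 0 b
  · rw [partition, card_image_of_injective _ (injective_blockPoints hpt), card_univ, hPcard]

end BlockPoints

theorem cBP_eq_ncard {d k : ℕ} {p : Fin d → ℝ} {pt : Fin (d + 1) → Fin k → Fin d → ℝ}
    (hpt : Function.Injective (Function.uncurry pt)) :
    cBP d k p (univ.biUnion fun c => univ.image (pt c)) (fun c => univ.image (pt c)) =
      {σ : RainbowMatching d (Fin k) |
        ∀ b, p ∈ convexHull ℝ (Set.range fun c => pt c (σ.block b c))}.ncard := by
  rw [← Set.ncard_image_of_injective _ (injective_partition hpt), cBP]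
  congr 1
  ext P
  simp only [Set.mem_ofPred_eq, Set.mem_image]
  constructor
  · rintro ⟨hcard, -, hunion, hP⟩
    have hcover (c : Fin (d + 1)) (j : Fin k) : ∃ B ∈ P, pt c j ∈ B :=
      mem_biUnion.1 (hunion ▸ mem_biUnion.2
        ⟨c, mem_univ c, mem_image_of_mem _ (mem_univ j)⟩)
    obtain ⟨σ, rfl⟩ := exists_partition_eq hpt (by simpa using hcard) hcover
      (fun B hB => (hP B hB).1) (fun B hB => (hP B hB).2.1)
    refine ⟨σ, fun b => ?_, rfl⟩
    rw [← coe_blockPoints]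
    exact (hP _ (mem_image_of_mem _ (mem_univ b))).2.2
  · rintro ⟨σ, hσ, rfl⟩
    refine ⟨?_, ?_, ?_, ?_⟩
    · simp [partition, card_image_of_injective _ (injective_blockPoints hpt)]
    · simp only [partition, forall_mem_image]
      exact fun b _ b' _ hne => disjoint_blockPoints hpt fun h => hne (congrArg _ h)
    · rw [partition, image_biUnion, ← biUnion_blockPoints]
      rfl
    · simp only [partition, forall_mem_image]
      refine fun b _ => ⟨card_blockPoints hpt, card_blockPoints_inter hpt, ?_⟩
      rw [coe_blockPoints]
      exact hσ b

end RainbowMatching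

lemma exists_injective_uncurry_image_eq {ι α : Type*} [DecidableEq α] {k : ℕ} {C : ι → Finset α}
    (hcard : ∀ c, (C c).card = k) (hdisj : ∀ c c', c ≠ c' → Disjoint (C c) (C c')) :
    ∃ pt : ι → Fin k → α, Function.Injective (Function.uncurry pt) ∧
      (fun c => Finset.univ.image (pt c)) = C := by
  let e (c : ι) : C c ≃ Fin k := (C c).equivFinOfCardEq (hcard c)
  refine ⟨fun c j => (e c).symm j, ?_, funext fun c => Finset.ext fun v => ?_⟩
  · rintro ⟨c, j⟩ ⟨c', j'⟩ h
    simp only [Function.uncurry_apply_pair] at h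
    obtain rfl : c = c' := by
      by_contra hne
      exact Finset.disjoint_left.1 (hdisj c c' hne) ((e c).symm j).2 (h ▸ ((e c').symm j').2)
    rw [(e c).symm.injective (Subtype.ext h)]
  · simp only [Finset.mem_image, Finset.mem_univ, true_and]
    exact ⟨fun ⟨j, hj⟩ => hj ▸ ((e c).symm j).2, fun hv => ⟨e c ⟨v, hv⟩, by simp⟩⟩

theorem cBP_lower_bound_plane_general (d k : ℕ) (p : Fin d → ℝ) (X : Finset (Fin d → ℝ))
    (C : Fin (d + 1) → Finset (Fin d → ℝ))
    (hccard : ∀ i, (C i).card = k)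
    (hcdisj : ∀ i j, i ≠ j → Disjoint (C i) (C j))
    (hX : X = Finset.univ.biUnion C)
    (hpX : p ∉ X)
    (hgen : GenPos d (↑X ∪ {p}))
    (hpos : 0 < cBP d k p X C) :
    2 ^ min (k - (d + 1)) (d + 1) * 3 ^ (k - 2 * (d + 1)) ≤ cBP d k p X C := by
  rcases Nat.eq_zero_or_pos d with rfl | hd
  · have hXempty : X = ∅ :=
      Finset.eq_empty_of_forall_notMem fun x hx => hpX (Subsingleton.elim x p ▸ hx)
    have hk : k = 0 := by
      rw [← hccard 0, Finset.card_eq_zero, ← Finset.subset_empty, ← hXempty, hX]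
      exact Finset.subset_biUnion_of_mem C (Finset.mem_univ 0)
    subst hk
    simpa using Nat.succ_le_of_lt hpos
  have : NeZero d := ⟨hd.ne'⟩
  obtain ⟨pt, hpt, rfl⟩ := exists_injective_uncurry_image_eq hccard hcdisj
  subst hX
  have hmem (c : Fin (d + 1)) (j : Fin k) :
      pt c j ∈ Finset.univ.biUnion fun c => Finset.univ.image (pt c) := by
    simp
  have hK := hgen.isCoboundaryModTwo_mem_convexHull (p := p) (by simp) hpt
    (fun c j => Or.inl (hmem c j)) (fun c j h => hpX (h ▸ hmem c j))
  rw [RainbowMatching.cBP_eq_ncard hpt] at hpos ⊢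
  obtain ⟨s, hs⟩ := Set.nonempty_of_ncard_ne_zero hpos.ne'
  have hsol := RainbowMatching.le_card_solutions hK hs (F := Finset.univ)
  rw [Finset.card_univ, Fintype.card_fin, ← Set.ncard_coe_finset] at hsol
  refine hsol.trans_eq (congrArg Set.ncard (Set.ext fun t => ?_))
  simp [RainbowMatching.mem_solutions]

/-- For `d = 2` and `k ≥ 6`: if `X` is a set of `3k` points in `ℝ²` partitioned into three
color classes of `k` points each, with `X ∪ {p}` in general position, and `cBP k X > 0`,
then `cBP k X ≥ 8 · 3^(k - 6)`. -/
theorem cBP_lower_bound_plane (k : ℕ) (hk : 6 ≤ k)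
    (p : Fin 2 → ℝ) (X : Finset (Fin 2 → ℝ)) (C : Fin 3 → Finset (Fin 2 → ℝ))
    (hXcard : X.card = 3 * k)
    (hccard : ∀ i : Fin 3, (C i).card = k)
    (hcdisj : ∀ i j : Fin 3, i ≠ j → Disjoint (C i) (C j))
    (hX : X = Finset.univ.biUnion C)
    (hpX : p ∉ X)
    (hgen : GenPos 2 (↑X ∪ {p}))
    (hpos : 0 < cBP 2 k p X C) :
    8 * 3 ^ (k - 6) ≤ cBP 2 k p X C := by
  have hmin : min (k - 3) 3 = 3 := by omega
  simpa [hmin] using cBP_lower_bound_plane_general 2 k p X C hccard hcdisj hX hpX hgen hpos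
end

section
/- Let d ≥ 2, let p ∈ ℝ^d, and let k ≥ d+2. Let X be a set of k(d+1) points in ℝ^d partitioned into d+1 color classes C_0, C_1, …, C_d of exactly k points each, with X ∪ {p} in general position. If cBP_k(X) > 0, then cBP_k(X) ≥ 2^{k−d−1}. -/
open scoped Classical

/-! Fix a generic vector `u`. If `x` is a transversal of the color classes, then among the `d + 1`
cones spanned by all but one of the vectors `x i - p`, an odd number contain `u` if `p` is in the
convex hull of `x`, and an even number otherwise. Hence, modulo 2, "`p` is in the hull of block `j`"
is a sum over the ridges of block `j`, and the indicator of "`p` is in the hull of every block" is a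
product of `k` such sums. Expand it over the arrangements of the points into `k` blocks with one
color held fixed. As `k ≥ d + 2`, each term takes ridges that omit the same color in two blocks, and
exchanging the omitted points pairs off equal terms. So these arrangements are even in number, and a
Birch partition `P` comes with a second one that has a block meeting, but not equal to, a block of
`P`. No partition contains both blocks, so removing either one and inducting on `k` doubles the
bound. -/

open Equiv Finset Module

section Parity

theorem sum_eq_zero_of_mul_right_invariant {G R : Type*} [Group G] [Semiring R] [CharP R 2]
    {s : Finset G} {f : G → R} {τ : G} (hτ : τ ≠ 1) (hττ : τ * τ = 1) (hs : ∀ σ ∈ s, σ * τ ∈ s)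
    (hf : ∀ σ, f (σ * τ) = f σ) : ∑ σ ∈ s, f σ = 0 :=
  sum_involution (fun σ _ => σ * τ) (fun σ _ => by rw [hf, CharTwo.add_self_eq_zero])
    (fun σ _ _ => by simpa using hτ) hs (fun σ _ => by rw [mul_assoc, hττ, mul_one])

variable {ι J R : Type*} [Fintype J] [CommSemiring R]

/-- One term in the expansion of `∏ j, ∑ i, g i (ridge i of block j)`, where `σ` arranges the
points into the blocks `l ↦ σ l j` and ridge `i` of a block omits its point of color `i`. The map
`φ` chooses the summand of each factor. -/
def ridgeProd (g : ∀ i : ι, ({l // l ≠ i} → J) → R) (φ : J → ι) (σ : ι → Perm J) : R :=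
  ∏ j, g (φ j) fun l => σ l j

variable (g : ∀ i : ι, ({l // l ≠ i} → J) → R) (φ : J → ι) (σ : ι → Perm J)

theorem ridgeProd_mul_mulSingle_swap {a b : J} (hab : φ a = φ b) :
    ridgeProd g φ (σ * Pi.mulSingle (φ a) (swap a b)) = ridgeProd g φ σ := by
  refine prod_congr rfl fun j _ => congrArg (g (φ j)) (funext fun l => ?_)
  rcases eq_or_ne (l : ι) (φ a) with hl | hl
  · have hja : j ≠ a := by rintro rfl; exact l.2 hl
    have hjb : j ≠ b := by rintro rfl; exact l.2 (hl.trans hab)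
    simp [hl, swap_apply_of_ne_of_ne hja hjb]
  · simp [Pi.mulSingle_eq_of_ne hl]

theorem ridgeProd_mul_const {s : Perm J} (hs : ∀ j, φ (s j) = φ j) :
    ridgeProd g φ (σ * Function.const ι s) = ridgeProd g φ σ := by
  rw [ridgeProd, ridgeProd, ← Equiv.prod_comp s fun j => g (φ j) fun l => σ l j]
  exact prod_congr rfl fun j _ => (congrArg (fun i => g i fun l => σ l (s j)) (hs j)).symm

/- Transposing `a` and `b` in the color `φ a` leaves the product unchanged. If this is the base
color `i₀`, compose with the simultaneous transposition in all colors. -/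
theorem exists_involution_ridgeProd_mul_eq [Nontrivial ι] (i₀ : ι) {a b : J} (hne : a ≠ b)
    (hab : φ a = φ b) :
    ∃ τ : ι → Perm J, τ i₀ = 1 ∧ τ ≠ 1 ∧ τ * τ = 1 ∧
      ∀ σ, ridgeProd g φ (σ * τ) = ridgeProd g φ σ := by
  have hs1 : swap a b ≠ 1 := swap_eq_one_iff.not.mpr hne
  let ρ : ι → Perm J := Pi.mulSingle (φ a) (swap a b)
  have hρ (σ : ι → Perm J) : ridgeProd g φ (σ * ρ) = ridgeProd g φ σ :=
    ridgeProd_mul_mulSingle_swap g φ σ hab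
  rcases eq_or_ne i₀ (φ a) with rfl | h0
  · have hφ (j : J) : φ (swap a b j) = φ j := by
      rw [swap_apply_def]
      split_ifs with hja hjb
      · rw [hja, hab]
      · rw [hjb, hab]
      · rfl
    obtain ⟨i, hi⟩ := exists_ne (φ a)
    refine ⟨ρ * Function.const ι (swap a b), by simp [ρ], fun h => hs1 ?_, ?_, fun σ => ?_⟩
    · simpa [ρ, hi] using congrFun h i
    · funext l
      rcases eq_or_ne l (φ a) with rfl | hl
      · simp [ρ]
      · simp [ρ, hl]
    · rw [← mul_assoc, ridgeProd_mul_const g φ _ hφ, hρ]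
  · exact ⟨ρ, by simp [ρ, h0], by simpa [ρ] using hs1, by simp [ρ, ← Pi.mulSingle_mul], hρ⟩

variable [Fintype ι] [Nontrivial ι]

theorem sum_prod_sum_ridge_eq_zero [CharP R 2] (hJ : Fintype.card ι < Fintype.card J) (i₀ : ι) :
    ∑ σ : ι → Perm J with σ i₀ = 1, ∏ j, ∑ i, g i (fun l => σ l j) = 0 := by
  simp_rw [prod_univ_sum]
  rw [sum_comm]
  refine sum_eq_zero fun φ _ => ?_
  obtain ⟨a, b, hne, hab⟩ := Fintype.exists_ne_map_eq_of_card_lt φ hJ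
  obtain ⟨τ, hτ0, hτ1, hττ, hτ⟩ := exists_involution_ridgeProd_mul_eq g φ i₀ hne hab
  exact sum_eq_zero_of_mul_right_invariant hτ1 hττ (fun σ hσ => by simp_all) hτ

theorem exists_ne_one_forall_sum_ridge_eq_one (hJ : Fintype.card ι < Fintype.card J)
    (g : ∀ i : ι, ({l // l ≠ i} → J) → ZMod 2)
    (hg : ∀ j, ∑ i, g i (fun _ => j) = 1) (i₀ : ι) :
    ∃ σ : ι → Perm J, σ i₀ = 1 ∧ σ ≠ 1 ∧ ∀ j, ∑ i, g i (fun l => σ l j) = 1 := by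
  by_contra! hσ
  have hsum := sum_prod_sum_ridge_eq_zero g hJ i₀
  rw [sum_eq_single_of_mem 1 (by simp)] at hsum
  · simp [hg] at hsum
  · intro σ hσ0 hσ1
    obtain ⟨j, hj⟩ := hσ σ (by simpa using hσ0) hσ1
    exact prod_eq_zero (mem_univ j) ((by decide : ∀ z : ZMod 2, z ≠ 1 → z = 0) _ hj)

end Parity

section RainbowPartitions

variable {ι α J : Type*} {C : ι → Finset α} {h : Finset α → Prop} {P : Finset (Finset α)}
  {B : Finset α}

theorem eq_of_mem_color (hC : Pairwise fun i j => Disjoint (C i) (C j)) {i j : ι} {x : α}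
    (hi : x ∈ C i) (hj : x ∈ C j) : i = j :=
  hC.eq fun hd => disjoint_left.mp hd hi hj

variable [Fintype ι] [DecidableEq α]

/-- Partitions of the union of the color classes `C i` into blocks that satisfy `h` and contain
every color exactly once. They are the colored Birch partitions to `p` if `h B` says that `p` is in
the convex hull of `B`. The number of blocks and their size are forced by those of the classes. -/
def rainbowPartitions (C : ι → Finset α) (h : Finset α → Prop) : Set (Finset (Finset α)) :=
  {P | (P : Set (Finset α)).PairwiseDisjoint id ∧ P.biUnion id = univ.biUnion C ∧
    ∀ B ∈ P, (∀ i, #(B ∩ C i) = 1) ∧ h B}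

theorem rainbowPartitions_finite : (rainbowPartitions C h).Finite := by
  refine (finite_toSet (univ.biUnion C).powerset.powerset).subset fun P hP => ?_
  rw [mem_coe, mem_powerset]
  intro B hB
  rw [mem_powerset, ← hP.2.1]
  exact subset_biUnion_of_mem id hB

/-- Block `j` of the arrangement in which `e i j` is the point of color `i` in block `j`. -/
noncomputable def block (e : ∀ i, J ≃ C i) (j : J) : Finset α :=
  univ.image fun i => (e i j : α)

theorem exists_block_eq_of_mem_rainbowPartitions (hP : P ∈ rainbowPartitions C h) :
    ∃ e : ∀ i, P ≃ C i, ∀ B, block e B = B := by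
  obtain ⟨hdisj, hunion, hB⟩ := hP
  choose f hf using fun i (B : P) => card_eq_one.mp ((hB B B.2).1 i)
  have hmem (i : ι) (B : P) (x : α) : x ∈ B.1 ∧ x ∈ C i ↔ x = f i B := by
    rw [← mem_inter, hf, mem_singleton]
  have hfB (i : ι) (B : P) : f i B ∈ B.1 := ((hmem i B _).mpr rfl).1
  have hinj (i : ι) : Function.Injective fun B => (⟨f i B, ((hmem i B _).mpr rfl).2⟩ : C i) :=
    fun B B' hBB' => Subtype.ext <| hdisj.elim_finset B.2 B'.2 _ (hfB i B)
      (have hf' : f i B = f i B' := congrArg Subtype.val hBB'; hf' ▸ hfB i B')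
  have hcover {x : α} : x ∈ P.biUnion id ↔ ∃ i, x ∈ C i := by simp [hunion]
  have hsurj (i : ι) : Function.Surjective fun B => (⟨f i B, ((hmem i B _).mpr rfl).2⟩ : C i) := by
    rintro ⟨x, hx⟩
    obtain ⟨B, hBP, hxB⟩ := mem_biUnion.mp (hcover.mpr ⟨i, hx⟩)
    exact ⟨⟨B, hBP⟩, Subtype.ext ((hmem i ⟨B, hBP⟩ x).mp ⟨hxB, hx⟩).symm⟩
  refine ⟨fun i => .ofBijective _ ⟨hinj i, hsurj i⟩, fun B => ?_⟩
  ext x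
  simp only [block, mem_image, mem_univ, true_and]
  refine ⟨by rintro ⟨i, rfl⟩; exact hfB i B, fun hx => ?_⟩
  obtain ⟨i, hi⟩ := hcover.mp (mem_biUnion.mpr ⟨B, B.2, hx⟩)
  exact ⟨i, ((hmem i B x).mp ⟨hx, hi⟩).symm⟩

theorem card_eq_card_color_of_mem_rainbowPartitions (hP : P ∈ rainbowPartitions C h) (i : ι) :
    #P = #(C i) := by
  obtain ⟨e, -⟩ := exists_block_eq_of_mem_rainbowPartitions hP
  simpa using Fintype.card_congr (e i)

theorem coe_mem_block (hC : Pairwise fun i j => Disjoint (C i) (C j)) {e : ∀ i, J ≃ C i}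
    {i : ι} {x : C i} {j : J} :
    (x : α) ∈ block e j ↔ e i j = x := by
  simp only [block, mem_image, mem_univ, true_and]
  refine ⟨?_, fun hx => ⟨i, congrArg _ hx⟩⟩
  rintro ⟨l, hl⟩
  obtain rfl : l = i := eq_of_mem_color hC (hl ▸ (e l j).2) x.2
  exact Subtype.ext hl

theorem block_inter_color (hC : Pairwise fun i j => Disjoint (C i) (C j)) (e : ∀ i, J ≃ C i)
    (i : ι) (j : J) : block e j ∩ C i = {↑(e i j)} := by
  ext x
  rw [mem_inter, mem_singleton]
  refine ⟨fun ⟨hx, hi⟩ => ?_, ?_⟩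
  · exact (congrArg Subtype.val ((coe_mem_block hC (x := ⟨x, hi⟩)).mp hx)).symm
  · rintro rfl
    exact ⟨(coe_mem_block hC).mpr rfl, (e i j).2⟩

theorem card_block (hC : Pairwise fun i j => Disjoint (C i) (C j)) (e : ∀ i, J ≃ C i) (j : J) :
    #(block e j) = Fintype.card ι :=
  card_image_of_injective _ fun i i' (hi : (e i j : α) = e i' j) =>
    eq_of_mem_color hC (e i j).2 (hi ▸ (e i' j).2)

theorem pairwise_disjoint_block (hC : Pairwise fun i j => Disjoint (C i) (C j))
    (e : ∀ i, J ≃ C i) :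
    Pairwise fun j j' => Disjoint (block e j) (block e j') := by
  refine fun j j' hne => disjoint_left.mpr fun x hx hx' => hne ?_
  obtain ⟨i, -, rfl⟩ := mem_image.mp hx
  exact (e i).injective ((coe_mem_block hC).mp hx').symm

theorem image_block_mem_rainbowPartitions [Fintype J]
    (hC : Pairwise fun i j => Disjoint (C i) (C j)) (e : ∀ i, J ≃ C i)
    (he : ∀ j, h (block e j)) : univ.image (block e) ∈ rainbowPartitions C h := by
  refine ⟨?_, ?_, ?_⟩
  · rw [coe_image, coe_univ, Set.image_univ]
    exact (pairwise_disjoint_block hC e).range_pairwise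
  · ext x
    simp only [mem_biUnion, mem_image, mem_univ, true_and, id, exists_exists_eq_and]
    constructor
    · rintro ⟨j, hx⟩
      obtain ⟨i, -, rfl⟩ := mem_image.mp hx
      exact ⟨i, (e i j).2⟩
    · rintro ⟨i, hi⟩
      exact ⟨(e i).symm ⟨x, hi⟩, (coe_mem_block hC (x := ⟨x, hi⟩)).mpr (by simp)⟩
  · simp only [mem_image, mem_univ, true_and, forall_exists_index, forall_apply_eq_imp_iff]
    exact fun j => ⟨fun i => by rw [block_inter_color hC, card_singleton], he j⟩

theorem card_of_mem_rainbowPartitions (hC : Pairwise fun i j => Disjoint (C i) (C j))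
    (hP : P ∈ rainbowPartitions C h) (hB : B ∈ P) :
    #B = Fintype.card ι := by
  obtain ⟨e, he⟩ := exists_block_eq_of_mem_rainbowPartitions hP
  exact (congrArg card (he ⟨B, hB⟩)).symm.trans (card_block hC e _)

/-- On transversals of the color classes, `h` is the coboundary modulo 2 of a cochain `g`, where
`g i` is evaluated on the ridge of the transversal that omits the color `i`. -/
def IsRainbowCoboundary (C : ι → Finset α) (h : Finset α → Prop) : Prop :=
  ∃ g : ∀ i : ι, ({l // l ≠ i} → α) → ZMod 2, ∀ x : ι → α, (∀ i, x i ∈ C i) →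
    (h (univ.image x) ↔ ∑ i, g i (fun l => x l) = 1)

theorem IsRainbowCoboundary.mono {C' : ι → Finset α} (hh : IsRainbowCoboundary C h)
    (hC : ∀ i, C' i ⊆ C i) : IsRainbowCoboundary C' h :=
  hh.imp fun _ hg x hx => hg x fun i => hC i (hx i)

theorem exists_mem_rainbowPartitions_not_disjoint [Nontrivial ι]
    (hC : Pairwise fun i j => Disjoint (C i) (C j)) (hcard : ∀ i, Fintype.card ι < #(C i))
    (hh : IsRainbowCoboundary C h) (hP : P ∈ rainbowPartitions C h) :
    ∃ Q ∈ rainbowPartitions C h, ∃ B ∈ P, ∃ B' ∈ Q, B ≠ B' ∧ ¬Disjoint B B' := by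
  obtain ⟨g, hg⟩ := hh
  obtain ⟨e, he⟩ := exists_block_eq_of_mem_rainbowPartitions hP
  obtain ⟨i₀⟩ : Nonempty ι := inferInstance
  have hP_card : Fintype.card ι < Fintype.card P := by
    simpa [card_eq_card_color_of_mem_rainbowPartitions hP i₀] using hcard i₀
  have hgP (B : P) : ∑ i, g i (fun l => e l B) = 1 := by
    rw [← hg (fun l => e l B) fun l => (e l B).2]
    change h (block e B)
    rw [he]
    exact (hP.2.2 B B.2).2
  obtain ⟨σ, hσ0, hσ1, hσ⟩ := exists_ne_one_forall_sum_ridge_eq_one hP_card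
    (fun i x => g i fun l => e l (x l)) hgP i₀
  let e' (i : ι) : P ≃ C i := (σ i).trans (e i)
  have hQ : univ.image (block e') ∈ rainbowPartitions C h :=
    image_block_mem_rainbowPartitions hC e' fun B =>
      (hg (fun l => e' l B) fun l => (e' l B).2).mpr (hσ B)
  obtain ⟨l, B, hlB⟩ : ∃ l B, σ l B ≠ B := by
    by_contra! hc
    exact hσ1 (funext fun l => Equiv.ext (hc l))
  refine ⟨_, hQ, B, B.2, block e' B, mem_image_of_mem _ (mem_univ _), fun heq => hlB ?_, ?_⟩
  · refine (e l).injective ((coe_mem_block hC (e := e')).mp ?_)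
    rw [← heq, ← he B, coe_mem_block hC]
  · rw [not_disjoint_iff, ← he B]
    exact ⟨e i₀ B, (coe_mem_block hC).mpr rfl, (coe_mem_block hC).mpr (by simp [e', hσ0])⟩

theorem card_inter_sdiff_of_disjoint {s t u : Finset α} (hsu : Disjoint s u) :
    #(s ∩ (t \ u)) = #(s ∩ t) := by
  rw [← inter_sdiff_assoc, sdiff_eq_self_of_disjoint (hsu.mono_left inter_subset_left)]

theorem biUnion_sdiff_eq (B : Finset α) : univ.biUnion (fun i => C i \ B) = univ.biUnion C \ B := by
  ext x
  simp

theorem erase_mem_rainbowPartitions (hP : P ∈ rainbowPartitions C h) (hB : B ∈ P) :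
    P.erase B ∈ rainbowPartitions (fun i => C i \ B) h := by
  obtain ⟨hdisj, hunion, hblock⟩ := hP
  have hdisjB : ∀ D ∈ P.erase B, Disjoint D B := fun D hD =>
    hdisj (mem_of_mem_erase hD) hB (ne_of_mem_erase hD)
  refine ⟨hdisj.subset (coe_subset.mpr (erase_subset B P)), ?_, fun D hD => ⟨fun i => ?_, ?_⟩⟩
  · have hB_disj : Disjoint ((P.erase B).biUnion id) B := (disjoint_biUnion_left _ _ _).mpr hdisjB
    rw [biUnion_sdiff_eq, ← hunion, ← insert_erase hB, biUnion_insert, erase_insert_eq_erase,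
      erase_idem, id, union_sdiff_cancel_left hB_disj.symm]
  · rw [card_inter_sdiff_of_disjoint (hdisjB D hD), (hblock D (mem_of_mem_erase hD)).1 i]
  · exact (hblock D (mem_of_mem_erase hD)).2

theorem notMem_of_mem_rainbowPartitions_sdiff [Nonempty ι]
    (hP : P ∈ rainbowPartitions (fun i => C i \ B) h) : B ∉ P := by
  intro hB
  obtain ⟨i⟩ : Nonempty ι := inferInstance
  simpa using (hP.2.2 B hB).1 i

theorem insert_mem_rainbowPartitions (hBC : B ⊆ univ.biUnion C) (hBi : ∀ i, #(B ∩ C i) = 1)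
    (hBh : h B) (hP : P ∈ rainbowPartitions (fun i => C i \ B) h) :
    insert B P ∈ rainbowPartitions C h := by
  obtain ⟨hdisj, hunion, hblock⟩ := hP
  rw [biUnion_sdiff_eq] at hunion
  have hdisjB : ∀ D ∈ P, Disjoint D B := fun D hD =>
    sdiff_disjoint.mono_left (hunion ▸ subset_biUnion_of_mem id hD)
  refine ⟨?_, ?_, ?_⟩
  · rw [coe_insert]
    exact hdisj.insert fun D hD _ => (hdisjB D hD).symm
  · rw [biUnion_insert, hunion, id, union_sdiff_of_subset hBC]
  · refine forall_mem_insert _ _ _ |>.mpr ⟨⟨hBi, hBh⟩, fun D hD => ⟨fun i => ?_, (hblock D hD).2⟩⟩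
    rw [← card_inter_sdiff_of_disjoint (hdisjB D hD), (hblock D hD).1 i]

theorem ncard_rainbowPartitions_sdiff_le [Nonempty ι] (hP : P ∈ rainbowPartitions C h)
    (hB : B ∈ P) : (rainbowPartitions (fun i => C i \ B) h).ncard ≤
      (rainbowPartitions C h ∩ {Q | B ∈ Q}).ncard := by
  have hBC : B ⊆ univ.biUnion C := hP.2.1 ▸ subset_biUnion_of_mem id hB
  obtain ⟨hBi, hBh⟩ := hP.2.2 B hB
  refine Set.ncard_le_ncard_of_injOn (insert B) (fun Q hQ => ?_) (fun Q hQ Q' hQ' heq => ?_)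
    (rainbowPartitions_finite.inter_of_left _)
  · exact ⟨insert_mem_rainbowPartitions hBC hBi hBh hQ, mem_insert_self B Q⟩
  · rw [← erase_insert (notMem_of_mem_rainbowPartitions_sdiff hQ), heq,
      erase_insert (notMem_of_mem_rainbowPartitions_sdiff hQ')]

theorem ncard_inter_add_ncard_inter_le_of_not_disjoint {B' : Finset α} (hne : B ≠ B')
    (hBB' : ¬Disjoint B B') :
    (rainbowPartitions C h ∩ {Q | B ∈ Q}).ncard + (rainbowPartitions C h ∩ {Q | B' ∈ Q}).ncard ≤
      (rainbowPartitions C h).ncard := by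
  rw [← Set.ncard_union_eq _ (rainbowPartitions_finite.inter_of_left _)
    (rainbowPartitions_finite.inter_of_left _)]
  · exact Set.ncard_le_ncard (Set.union_subset Set.inter_subset_left Set.inter_subset_left)
      rainbowPartitions_finite
  · rw [Set.disjoint_left]
    rintro Q ⟨hQ, hB⟩ ⟨-, hB'⟩
    exact hBB' (hQ.1 hB hB' hne)

theorem two_pow_le_ncard_rainbowPartitions [Nontrivial ι] {m : ℕ}
    (hC : Pairwise fun i j => Disjoint (C i) (C j)) (hcard : ∀ i, #(C i) = Fintype.card ι + m)
    (hh : IsRainbowCoboundary C h) (hne : (rainbowPartitions C h).Nonempty) :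
    2 ^ m ≤ (rainbowPartitions C h).ncard := by
  induction m generalizing C with
  | zero => exact (Set.ncard_pos rainbowPartitions_finite).mpr hne
  | succ m ih =>
    have hcontain {P : Finset (Finset α)} (hP : P ∈ rainbowPartitions C h) {B : Finset α}
        (hB : B ∈ P) : 2 ^ m ≤ (rainbowPartitions C h ∩ {Q | B ∈ Q}).ncard := by
      refine (ih (fun i j hij => (hC hij).mono sdiff_subset sdiff_subset) (fun i => ?_)
        (hh.mono fun i => sdiff_subset) ⟨_, erase_mem_rainbowPartitions hP hB⟩).trans
        (ncard_rainbowPartitions_sdiff_le hP hB)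
      rw [card_sdiff, (hP.2.2 B hB).1 i, hcard i]
      rfl
    obtain ⟨P, hP⟩ := hne
    obtain ⟨Q, hQ, B, hB, B', hB', hBB', hmeet⟩ :=
      exists_mem_rainbowPartitions_not_disjoint hC (fun i => by rw [hcard i]; omega) hh hP
    calc 2 ^ (m + 1) = 2 ^ m + 2 ^ m := by ring
      _ ≤ _ := add_le_add (hcontain hP hB) (hcontain hQ hB')
      _ ≤ _ := ncard_inter_add_ncard_inter_le_of_not_disjoint hBB' hmeet

end RainbowPartitions

section Separating

variable {ι β : Type*} [Fintype ι] [LinearOrder β] {t : ι → β}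

theorem card_filter_forall_le_eq_one [Nonempty ι] (ht : Function.Injective t) :
    #{i | ∀ j, t j ≤ t i} = 1 := by
  obtain ⟨m, hm⟩ := Finite.exists_max t
  refine card_eq_one.mpr ⟨m, ?_⟩
  ext i
  simp only [mem_filter_univ, mem_singleton]
  exact ⟨fun hi => ht ((hm i).antisymm (hi m)), fun hi => hi ▸ hm⟩

theorem even_card_filter_separating (ht : Function.Injective t) {P : ι → Prop} [DecidablePred P]
    (hP : ∃ i, P i) (hN : ∃ i, ¬P i) :
    Even #{i | (∀ j, P j → t j ≤ t i) ∧ ∀ j, ¬P j → t i ≤ t j} := by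
  obtain ⟨m, hm, hm_max⟩ := exists_max_image {i | P i} t (by simpa [Finset.Nonempty] using hP)
  obtain ⟨n, hn, hn_min⟩ := exists_min_image {i | ¬P i} t (by simpa [Finset.Nonempty] using hN)
  simp only [mem_filter_univ] at hn hn_min hm hm_max
  have hset : ({i | (∀ j, P j → t j ≤ t i) ∧ ∀ j, ¬P j → t i ≤ t j} : Finset ι) =
      if t m ≤ t n then {m, n} else ∅ := by
    ext i
    split_ifs with hmn
    · simp only [mem_filter_univ, mem_insert, mem_singleton]
      constructor
      · rintro ⟨hiP, hiN⟩
        by_cases hi : P i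
        · exact .inl (ht ((hm_max i hi).antisymm (hiP m hm)))
        · exact .inr (ht ((hiN n hn).antisymm (hn_min i hi)))
      · rintro (rfl | rfl)
        · exact ⟨hm_max, fun j hj => hmn.trans (hn_min j hj)⟩
        · exact ⟨fun j hj => (hm_max j hj).trans hmn, hn_min⟩
    · simpa using fun hi => ⟨n, hn, (not_le.mp hmn).trans_le (hi m hm)⟩
  rw [hset]
  split_ifs
  · rw [card_pair (by rintro rfl; exact hn hm)]
    exact even_two
  · simp

theorem odd_card_filter_separating_iff [Nonempty ι] (ht : Function.Injective t) (P : ι → Prop)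
    [DecidablePred P] :
    Odd #{i | (∀ j, P j → t j ≤ t i) ∧ ∀ j, ¬P j → t i ≤ t j} ↔ (∀ i, P i) ∨ ∀ i, ¬P i := by
  by_cases hP : ∀ i, P i
  · simp [hP, card_filter_forall_le_eq_one ht]
  by_cases hN : ∀ i, ¬P i
  · have hmin : #{i | ∀ j, t i ≤ t j} = 1 :=
      card_filter_forall_le_eq_one (OrderDual.toDual.injective.comp ht)
    simp [hN, hmin]
  simpa [hP, hN] using
    even_card_filter_separating ht (not_forall_not.mp hN) (not_forall.mp hP)

end Separating

section Cones

variable {𝕜 ι V : Type*} [Field 𝕜] [AddCommGroup V] [Module 𝕜 V]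

theorem exists_forall_notMem_span_of_card_lt_finrank [Infinite 𝕜] (s : Finset V) :
    ∃ u : V, ∀ T ⊆ s, #T < finrank 𝕜 V → u ∉ Submodule.span 𝕜 (T : Set V) := by
  let F : Finset (Submodule 𝕜 V) :=
    (s.powerset.filter fun T => #T < finrank 𝕜 V).image fun T : Finset V => Submodule.span 𝕜 T
  have hF : ⊤ ∉ F := by
    intro hmem
    obtain ⟨T, hT, htop⟩ := mem_image.mp hmem
    refine (mem_filter.mp hT).2.not_ge ?_
    calc finrank 𝕜 V = finrank 𝕜 (Submodule.span 𝕜 (T : Set V)) := by rw [htop, finrank_top]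
      _ ≤ #T := finrank_span_finset_le_card T
  obtain ⟨u, hu⟩ := (Set.ne_univ_iff_exists_notMem _).mp
    (Subspace.biUnion_ne_univ_of_top_notMem hF)
  refine ⟨u, fun T hT hcard huT => hu (Set.mem_biUnion ?_ huT)⟩
  exact mem_image_of_mem _ (mem_filter.mpr ⟨mem_powerset.mpr hT, hcard⟩)

variable [Fintype ι] {y : ι → V} {a c lam : ι → 𝕜} {u : V}

theorem linearCombination_eq_sum_subtype_ne {i : ι} (hci : c i = 0) :
    Fintype.linearCombination 𝕜 y c = ∑ l : {l // l ≠ i}, c l • y l := by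
  rw [Fintype.linearCombination_apply, Fintype.sum_eq_add_sum_subtype_ne _ i, hci, zero_smul,
    zero_add]

theorem eq_zero_of_linearCombination_eq_zero {i : ι}
    (hy : LinearIndependent 𝕜 fun l : {l // l ≠ i} => y l)
    (hc : Fintype.linearCombination 𝕜 y c = 0) (hci : c i = 0) : c = 0 := by
  rw [linearCombination_eq_sum_subtype_ne hci] at hc
  funext j
  rcases eq_or_ne j i with rfl | hj
  · exact hci
  · exact Fintype.linearIndependent_iff.mp hy (fun l => c l) hc ⟨j, hj⟩

theorem exists_linearCombination_eq_zero_forall_ne_zero [FiniteDimensional 𝕜 V]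
    (hι : Fintype.card ι = finrank 𝕜 V + 1)
    (hy : ∀ i : ι, LinearIndependent 𝕜 fun l : {l // l ≠ i} => y l) :
    ∃ lam : ι → 𝕜, Fintype.linearCombination 𝕜 y lam = 0 ∧ ∀ i, lam i ≠ 0 := by
  obtain ⟨lam, hlam, i, hi⟩ := Fintype.not_linearIndependent_iff.mp
    fun h : LinearIndependent 𝕜 y => by have := h.fintype_card_le_finrank; omega
  refine ⟨lam, hlam, fun j hj => hi ?_⟩
  exact congrFun (eq_zero_of_linearCombination_eq_zero (hy j) hlam hj) i

theorem linearCombination_surjective [FiniteDimensional 𝕜 V]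
    (hι : Fintype.card ι = finrank 𝕜 V + 1) {i : ι}
    (hy : LinearIndependent 𝕜 fun l : {l // l ≠ i} => y l) :
    Function.Surjective (Fintype.linearCombination 𝕜 y) := by
  rw [← LinearMap.range_eq_top, Fintype.range_linearCombination, eq_top_iff,
    ← hy.span_eq_top_of_card_eq_finrank' (by simp [hι])]
  exact Submodule.span_mono (Set.range_comp_subset_range Subtype.val y)

theorem div_injective_of_notMem_span (hlam : Fintype.linearCombination 𝕜 y lam = 0)
    (hlam0 : ∀ i, lam i ≠ 0) (ha : Fintype.linearCombination 𝕜 y a = u)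
    (hu : ∀ i j, i ≠ j → u ∉ Submodule.span 𝕜 (y '' {i, j}ᶜ)) :
    Function.Injective fun i => a i / lam i := by
  intro i j hij
  by_contra hne
  have hu_eq : ∑ l, (a l - a i / lam i * lam l) • y l = u := by
    have := congrArg₂ (· - (a i / lam i) • ·) ha hlam
    simpa [sub_smul, mul_smul, Fintype.linearCombination_apply, smul_sum] using this
  refine hu i j hne (hu_eq ▸ Submodule.sum_mem _ fun l _ => ?_)
  by_cases hl : l ∈ ({i, j} : Set ι)
  · have hzero : a l - a i / lam i * lam l = 0 := by
      rcases hl with rfl | rfl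
      · rw [div_mul_cancel₀ _ (hlam0 l), sub_self]
      · rw [show a i / lam i = a l / lam l from hij, div_mul_cancel₀ _ (hlam0 l), sub_self]
    simp [hzero]
  · exact Submodule.smul_mem _ _ (Submodule.subset_span (Set.mem_image_of_mem y hl))

variable [LinearOrder 𝕜] [IsStrictOrderedRing 𝕜]

theorem convexHull_range_eq_image_stdSimplex :
    convexHull 𝕜 (Set.range y) = Fintype.linearCombination 𝕜 y '' stdSimplex 𝕜 ι := by
  rw [← convexHull_rangle_single_eq_stdSimplex, LinearMap.image_convexHull, ← Set.range_comp]
  exact congrArg _ (congrArg _ (funext fun i => by simp))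

theorem zero_mem_convexHull_range_iff [Nonempty ι]
    (hy : ∀ i : ι, LinearIndependent 𝕜 fun l : {l // l ≠ i} => y l)
    (hlam : Fintype.linearCombination 𝕜 y lam = 0) (hlam0 : ∀ i, lam i ≠ 0) :
    0 ∈ convexHull 𝕜 (Set.range y) ↔ (∀ i, lam i < 0) ∨ ∀ i, ¬lam i < 0 := by
  rw [convexHull_range_eq_image_stdSimplex]
  constructor
  · rintro ⟨w, ⟨hw0, hw1⟩, hw⟩
    obtain ⟨i⟩ := ‹Nonempty ι›
    have hwlam : w = (w i / lam i) • lam := by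
      rw [← sub_eq_zero]
      exact eq_zero_of_linearCombination_eq_zero (hy i) (by simp [hw, hlam]) (by simp [hlam0 i])
    have hw_apply (j : ι) : w j = w i / lam i * lam j := congrFun hwlam j
    rcases lt_trichotomy (w i / lam i) 0 with hs | hs | hs
    · exact .inl fun j => (nonpos_of_mul_nonneg_right (hw_apply j ▸ hw0 j) hs).lt_of_ne (hlam0 j)
    · simp [show w = 0 by simpa [hs] using hwlam] at hw1
    · exact .inr fun j hj => (hw0 j).not_gt (hw_apply j ▸ mul_neg_of_pos_of_neg hs hj)
  · intro hsign
    have hsum : ∑ i, lam i ≠ 0 := by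
      rcases hsign with h | h
      · exact (sum_neg (fun i _ => h i) univ_nonempty).ne
      · exact (sum_pos (fun i _ => (not_lt.mp (h i)).lt_of_ne (hlam0 i).symm) univ_nonempty).ne'
    refine ⟨(∑ i, lam i)⁻¹ • lam, ⟨fun i => ?_, ?_⟩, by simp [hlam]⟩
    · rcases hsign with h | h
      · exact mul_nonneg_of_nonpos_of_nonpos
          (inv_nonpos.mpr (sum_nonpos fun i _ => (h i).le)) (h i).le
      · exact mul_nonneg (inv_nonneg.mpr (sum_nonneg fun i _ => not_lt.mp (h i))) (not_lt.mp (h i))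
    · simp [← mul_sum, hsum]

theorem mem_hull_range_ne_iff {i : ι} :
    u ∈ PointedCone.hull 𝕜 (Set.range fun l : {l // l ≠ i} => y l) ↔
      ∃ c : ι → 𝕜, (∀ j, 0 ≤ c j) ∧ c i = 0 ∧ Fintype.linearCombination 𝕜 y c = u := by
  rw [PointedCone.hull, Submodule.mem_span_range_iff_exists_fun]
  constructor
  · rintro ⟨c, rfl⟩
    refine ⟨fun j => if hj : j ≠ i then c ⟨j, hj⟩ else 0, fun j => ?_, by simp, ?_⟩
    · dsimp only
      split_ifs with hj
      exacts [(c ⟨j, hj⟩).2, le_rfl]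
    · rw [linearCombination_eq_sum_subtype_ne (dif_neg (not_not.mpr rfl))]
      exact Fintype.sum_congr _ _ fun l => by rw [dif_pos l.2]; rfl
  · rintro ⟨c, hc, hci, rfl⟩
    refine ⟨fun l => ⟨c l, hc l⟩, ?_⟩
    rw [linearCombination_eq_sum_subtype_ne hci]
    rfl

theorem mem_hull_range_ne_iff_of_linearCombination_eq {i : ι}
    (hy : LinearIndependent 𝕜 fun l : {l // l ≠ i} => y l)
    (hlam : Fintype.linearCombination 𝕜 y lam = 0) (hlam0 : ∀ i, lam i ≠ 0)
    (ha : Fintype.linearCombination 𝕜 y a = u) :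
    u ∈ PointedCone.hull 𝕜 (Set.range fun l : {l // l ≠ i} => y l) ↔
      (∀ j, lam j < 0 → a j / lam j ≤ a i / lam i) ∧
        ∀ j, ¬lam j < 0 → a i / lam i ≤ a j / lam j := by
  have hc_apply (j : ι) :
      (a - (a i / lam i) • lam) j = lam j * (a j / lam j - a i / lam i) := by
    have := hlam0 j
    simp only [Pi.sub_apply, Pi.smul_apply, smul_eq_mul]
    field_simp
  have hc_unique {c : ι → 𝕜} (hci : c i = 0) (hc : Fintype.linearCombination 𝕜 y c = u) :
      c = a - (a i / lam i) • lam :=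
    sub_eq_zero.mp <| eq_zero_of_linearCombination_eq_zero hy (by simp [hc, ha, hlam])
      (by simp [hci, hlam0 i])
  have hiff : u ∈ PointedCone.hull 𝕜 (Set.range fun l : {l // l ≠ i} => y l) ↔
      ∀ j, 0 ≤ lam j * (a j / lam j - a i / lam i) := by
    rw [mem_hull_range_ne_iff]
    constructor
    · rintro ⟨c, hc, hci, hcu⟩ j
      rw [← hc_apply, ← hc_unique hci hcu]
      exact hc j
    · exact fun h => ⟨a - (a i / lam i) • lam, fun j => hc_apply j ▸ h j, by simp [hlam0 i],
        by simp [ha, hlam]⟩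
  rw [hiff, ← forall_and]
  refine forall_congr' fun j => ?_
  rcases (hlam0 j).lt_or_gt with hj | hj
  · rw [← neg_mul_neg, mul_nonneg_iff_of_pos_left (neg_pos.mpr hj)]
    simp [hj]
  · simp [hj.not_gt, mul_nonneg_iff_of_pos_left hj]

/- The nonnegative `c` with `∑ i, c i • y i = u` form the part in the orthant of a line of direction
`lam`. It is a ray if `lam` has constant sign, and a segment or empty otherwise. Its endpoints
correspond to the facets whose cone contains `u`. -/
theorem zero_mem_convexHull_range_iff_odd_card [FiniteDimensional 𝕜 V]
    (hι : Fintype.card ι = finrank 𝕜 V + 1)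
    (hy : ∀ i : ι, LinearIndependent 𝕜 fun l : {l // l ≠ i} => y l)
    (hu : ∀ i j, i ≠ j → u ∉ Submodule.span 𝕜 (y '' {i, j}ᶜ)) :
    0 ∈ convexHull 𝕜 (Set.range y) ↔
      Odd #{i : ι | u ∈ PointedCone.hull 𝕜 (Set.range fun l : {l // l ≠ i} => y l)} := by
  obtain ⟨lam, hlam, hlam0⟩ := exists_linearCombination_eq_zero_forall_ne_zero hι hy
  have : Nonempty ι := Fintype.card_pos_iff.mp (by omega)
  obtain ⟨a, ha⟩ := linearCombination_surjective hι (hy (Classical.arbitrary ι)) u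
  have ht := div_injective_of_notMem_span hlam hlam0 ha hu
  rw [filter_congr fun i _ => mem_hull_range_ne_iff_of_linearCombination_eq (hy i) hlam hlam0 ha,
    zero_mem_convexHull_range_iff hy hlam hlam0,
    odd_card_filter_separating_iff ht fun j => lam j < 0]

end Cones

open scoped Pointwise in
theorem mem_convexHull_range_iff_zero_mem {𝕜 ι V : Type*} [Ring 𝕜] [PartialOrder 𝕜]
    [AddCommGroup V] [Module 𝕜 V] {x : ι → V} {p : V} :
    p ∈ convexHull 𝕜 (Set.range x) ↔ 0 ∈ convexHull 𝕜 (Set.range fun i => x i - p) := by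
  have hrange : (Set.range fun i => x i - p) = -p +ᵥ Set.range x := by
    rw [← Set.image_vadd, ← Set.range_comp]
    exact congrArg _ (funext fun i => sub_eq_neg_add _ _)
  rw [hrange, convexHull_vadd, Set.mem_vadd_set_iff_neg_vadd_mem, neg_neg, vadd_eq_add, add_zero]

section ColoredBirch

variable {𝕜 ι V : Type*} [Field 𝕜] [AddCommGroup V] [Module 𝕜 V] {p : V} {C : ι → Finset V}

variable (𝕜 p C) in
/-- No transversal of all but one of the color classes `C i` lies on a hyperplane through `p`. This
is the part of general position that the count of colored Birch partitions relies on. -/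
def RainbowGeneralPosition : Prop :=
  ∀ x : ι → V, (∀ i, x i ∈ C i) → ∀ i : ι, LinearIndependent 𝕜 fun l : {l // l ≠ i} => x l - p

variable [Fintype ι] [LinearOrder 𝕜] [IsStrictOrderedRing 𝕜] [DecidableEq V]

theorem RainbowGeneralPosition.isRainbowCoboundary [FiniteDimensional 𝕜 V]
    (hC : RainbowGeneralPosition 𝕜 p C) (hι : Fintype.card ι = finrank 𝕜 V + 1) :
    IsRainbowCoboundary C fun B => p ∈ convexHull 𝕜 (B : Set V) := by
  obtain ⟨u, hu⟩ :=
    exists_forall_notMem_span_of_card_lt_finrank (𝕜 := 𝕜) ((univ.biUnion C).image (· - p))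
  refine ⟨fun i z => if u ∈ PointedCone.hull 𝕜 (Set.range fun l => z l - p) then 1 else 0,
    fun x hx => ?_⟩
  have hux (i j : ι) (hij : i ≠ j) :
      u ∉ Submodule.span 𝕜 ((fun l => x l - p) '' {i, j}ᶜ) := by
    have hcard : #(({i, j}ᶜ : Finset ι).image fun l => x l - p) < finrank 𝕜 V := by
      have := Fintype.one_lt_card_iff.mpr ⟨i, j, hij⟩
      refine card_image_le.trans_lt ?_
      rw [card_compl, card_pair hij]
      omega
    refine mt (fun h => ?_) (hu _ (image_subset_iff.mpr fun l _ => ?_) hcard)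
    · rwa [coe_image, coe_compl, coe_pair]
    · exact mem_image_of_mem _ (mem_biUnion.mpr ⟨l, mem_univ l, hx l⟩)
  beta_reduce
  rw [coe_image, coe_univ, Set.image_univ, mem_convexHull_range_iff_zero_mem,
    zero_mem_convexHull_range_iff_odd_card hι (hC x hx) hux, sum_boole,
    ZMod.natCast_eq_one_iff_odd]

theorem cBP_lower_bound_general [Nontrivial ι] {k : ℕ} (hι : Fintype.card ι = finrank 𝕜 V + 1)
    (hk : Fintype.card ι ≤ k) (hcard : ∀ i, #(C i) = k)
    (hdisj : Pairwise fun i j => Disjoint (C i) (C j)) (hC : RainbowGeneralPosition 𝕜 p C)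
    (hne : (rainbowPartitions C fun B => p ∈ convexHull 𝕜 (B : Set V)).Nonempty) :
    2 ^ (k - Fintype.card ι) ≤
      (rainbowPartitions C fun B => p ∈ convexHull 𝕜 (B : Set V)).ncard := by
  have hV : 0 < finrank 𝕜 V := by have := Fintype.one_lt_card (α := ι); omega
  have := Module.finite_of_finrank_pos hV
  exact two_pow_le_ncard_rainbowPartitions hdisj
    (fun i => by rw [hcard, Nat.add_sub_cancel' hk]) (hC.isRainbowCoboundary hι) hne

end ColoredBirch

section Euclidean

variable {d k : ℕ} {p : Fin d → ℝ} {C : Fin (d + 1) → Finset (Fin d → ℝ)}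

theorem GenPos.linearIndependent_sub_s5 {S : Set (Fin d → ℝ)} (hS : GenPos d S) (hp : p ∈ S)
    (hd : 0 < d) {κ : Type*} [Fintype κ] (hκ : Fintype.card κ = d) {x : κ → Fin d → ℝ}
    (hx : Function.Injective x) (hxS : ∀ l, x l ∈ S) (hxp : ∀ l, x l ≠ p) :
    LinearIndependent ℝ fun l => x l - p := by
  refine linearIndependent_of_top_le_span_of_card_eq_finrank ?_ (by simp [hκ])
  by_contra hspan
  obtain ⟨f, hf, hle⟩ := Submodule.exists_le_ker_of_lt_top _
    (lt_top_iff_ne_top.mpr (mt Eq.ge hspan))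
  refine hS (d - 1) (by omega) (insert p (univ.image x)) ?_ ?_
    ⟨AffineSubspace.mk' p (LinearMap.ker f), ?_, ?_⟩
  · simpa [Set.insert_subset_iff, Set.range_subset_iff] using ⟨hp, hxS⟩
  · rw [card_insert_of_notMem (by simpa using hxp), card_image_of_injective _ hx, card_univ, hκ]
    omega
  · rw [AffineSubspace.direction_mk']
    have := Module.Dual.finrank_ker_add_one_of_ne_zero hf
    rw [finrank_fin_fun] at this
    omega
  · rw [coe_insert, coe_image, coe_univ, Set.image_univ, Set.insert_subset_iff,
      Set.range_subset_iff]
    exact ⟨AffineSubspace.self_mem_mk' _ _, fun l => (AffineSubspace.mem_mk').mpr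
      (hle (Submodule.subset_span ⟨l, rfl⟩))⟩

theorem GenPos.rainbowGeneralPosition (hgen : GenPos d (↑(univ.biUnion C) ∪ {p})) (hd : 0 < d)
    (hp : p ∉ univ.biUnion C) (hdisj : Pairwise fun i j => Disjoint (C i) (C j)) :
    RainbowGeneralPosition ℝ p C := by
  intro x hx i
  have hxC (l : Fin (d + 1)) : x l ∈ univ.biUnion C := mem_biUnion.mpr ⟨l, mem_univ l, hx l⟩
  refine hgen.linearIndependent_sub_s5 (.inr rfl) hd (by simp) (fun l l' hll' => ?_)
    (fun l => .inl (hxC l)) (fun l => ne_of_mem_of_not_mem (hxC l) hp)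
  exact Subtype.ext (eq_of_mem_color hdisj (hx l) (hll' ▸ hx l'))

theorem cBP_eq_ncard_rainbowPartitions (hcard : ∀ i, #(C i) = k)
    (hdisj : Pairwise fun i j => Disjoint (C i) (C j)) :
    cBP d k p (univ.biUnion C) C =
      (rainbowPartitions C fun B => p ∈ convexHull ℝ (B : Set (Fin d → ℝ))).ncard := by
  refine congrArg Set.ncard (Set.ext fun P => ⟨?_, fun hP => ?_⟩)
  · rintro ⟨-, hPdisj, hunion, hB⟩
    exact ⟨fun B hB B' hB' => hPdisj B hB B' hB', hunion, fun B hBP => (hB B hBP).2⟩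
  · exact ⟨(card_eq_card_color_of_mem_rainbowPartitions hP 0).trans (hcard 0),
      fun B hB B' hB' => hP.1 hB hB', hP.2.1,
      fun B hB => ⟨by simpa using card_of_mem_rainbowPartitions hdisj hP hB, hP.2.2 B hB⟩⟩

end Euclidean

/-- For `d ≥ 2` and `k ≥ d + 2`: if `X` is a set of `k(d+1)` points in `ℝ^d` partitioned
into `d + 1` color classes of exactly `k` points each, with `X ∪ {p}` in general position,
and `cBP k X > 0`, then `cBP k X ≥ 2^(k - d - 1)`. -/
theorem cBP_lower_bound (d k : ℕ) (hd : 2 ≤ d) (hk : d + 2 ≤ k)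
    (p : Fin d → ℝ) (X : Finset (Fin d → ℝ)) (C : Fin (d + 1) → Finset (Fin d → ℝ))
    (hXcard : X.card = k * (d + 1))
    (hccard : ∀ i : Fin (d + 1), (C i).card = k)
    (hcdisj : ∀ i j : Fin (d + 1), i ≠ j → Disjoint (C i) (C j))
    (hX : X = Finset.univ.biUnion C)
    (hpX : p ∉ X)
    (hgen : GenPos d (↑X ∪ {p}))
    (hpos : 0 < cBP d k p X C) :
    2 ^ (k - d - 1) ≤ cBP d k p X C := by
  subst hX
  have : Nontrivial (Fin (d + 1)) := Fin.nontrivial_iff_two_le.mpr (by omega)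
  have hC := hgen.rainbowGeneralPosition (by omega) hpX hcdisj
  rw [cBP_eq_ncard_rainbowPartitions hccard hcdisj] at hpos ⊢
  have hne := Set.nonempty_of_ncard_ne_zero hpos.ne'
  simpa [Nat.sub_sub] using cBP_lower_bound_general (by rw [finrank_fin_fun, Fintype.card_fin])
    (by rw [Fintype.card_fin]; omega) hccard hcdisj hC hne
end
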